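/- arXiv:2211.15818 — 4 statements merged into one kernel-verified Lean document; each statement's English description precedes it below -/
import Mathlib

section
/- Let G be a finite pseudo-solvable group. Then the complement of the prime graph of G is 3-colorable: there exists a function c from the prime numbers to a 3-element set such that c(p) ≠ c(q) whenever p and q are distinct primes dividing |G| for which G has no element of order p·q. -/
/-- A finite group is *pseudo-solvable* if it has a subnormal series whose factors are
all cyclic or isomorphic to the alternating group `A₅`. -/
def IsPseudoSolvable (G : Type*) [Group G] : Prop :=
  ∃ (n : ℕ) (H : Fin (n + 1) → Subgroup G),
    H 0 = ⊥ ∧ H (Fin.last n) = ⊤ ∧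
    ∀ i : Fin n, H i.castSucc ≤ H i.succ ∧
      ∃ hN : ((H i.castSucc).subgroupOf (H i.succ)).Normal,
        haveI := hN
        IsCyclic (H i.succ ⧸ (H i.castSucc).subgroupOf (H i.succ)) ∨
        Nonempty ((H i.succ ⧸ (H i.castSucc).subgroupOf (H i.succ)) ≃* alternatingGroup (Fin 5))

/-!
Call a prime `p` of high rank if `G` contains `C_p × C_p`. In a solvable group, two primes of high
rank are adjacent in the prime graph, since `C_q × C_q` cannot act fixed-point-freely on an
elementary abelian `r`-group. Two primes dividing `|G/G'|` are clearly adjacent. Two primes of low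
rank dividing `|G'|` are adjacent as well: after factoring out minimal normal subgroups of order
prime to both, one of the primes is the order of a cyclic minimal normal subgroup, and `G'`
centralizes it because its automorphism group is abelian. These three classes are the colours.

If `G` is not solvable, a normal perfect subgroup `V` maps onto `A₅`. A prime `r ∤ 60` is then
adjacent to 2, 3 and 5 unless it has high rank. Indeed, if `r` divides `|V|`, a Frattini argument
lifts elements of `A₅` into the centralizer of an element of order `r`. Otherwise, an element `x` of
order `r` acts on `V` coprimely; multiplying `x` by a suitable `m ∈ V` makes `(m x)^r`, a product of
conjugates of `m`, have an image of prescribed prime order in `A₅`. The same Frattini argument shows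
that 2 and 3 are adjacent unless 2 has high rank. So the colouring extends to 2, 3 and 5.
-/

open Subgroup
open scoped commutatorElement

universe u

section Order

variable {G H : Type*} [Group G] [Group H] {p q : ℕ}

theorem exists_mem_orderOf_eq_of_dvd_card [Fact p.Prime] {K : Subgroup G} [Finite K]
    (h : p ∣ Nat.card K) : ∃ x ∈ K, orderOf x = p := by
  obtain ⟨x, hx⟩ := exists_prime_orderOf_dvd_card' p h
  exact ⟨x, x.2, by rw [Subgroup.orderOf_coe, hx]⟩

theorem nontrivial_of_prime_dvd_card [Fact p.Prime] [Finite G] (h : p ∣ Nat.card G) :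
    Nontrivial G :=
  Finite.one_lt_card_iff_nontrivial.1
    ((Fact.out : p.Prime).one_lt.trans_le (Nat.le_of_dvd Nat.card_pos h))

theorem not_dvd_card_of_forall_pow_eq_one [Fact p.Prime] [Fact q.Prime] (hqp : q ≠ p)
    {K : Subgroup G} [Finite K] (hK : ∀ x ∈ K, x ^ p = 1) : ¬ q ∣ Nat.card K := by
  intro hq
  obtain ⟨x, hxK, hx⟩ := exists_mem_orderOf_eq_of_dvd_card hq
  have hdvd : q ∣ p := hx ▸ orderOf_dvd_of_pow_eq_one (hK x hxK)
  exact hqp ((Nat.prime_dvd_prime_iff_eq Fact.out Fact.out).1 hdvd)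

theorem eq_one_of_map_eq_one [Fact p.Prime] {f : G →* H} (hf : ¬ p ∣ Nat.card f.ker) {x : G}
    {k : ℕ} (hx : x ^ p ^ k = 1) (hfx : f x = 1) : x = 1 := by
  have hcop : (p ^ k).Coprime (Nat.card f.ker) :=
    ((Fact.out : p.Prime).coprime_iff_not_dvd.2 hf).pow_left k
  exact orderOf_eq_one_iff.1 <| Nat.eq_one_of_dvd_coprimes hcop (orderOf_dvd_of_pow_eq_one hx)
    (Subgroup.orderOf_dvd_natCard _ hfx)

theorem orderOf_map_eq_prime [Fact p.Prime] {f : G →* H} (hf : ¬ p ∣ Nat.card f.ker) {x : G}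
    (hx : orderOf x = p) : orderOf (f x) = p := by
  obtain ⟨hpow, hne⟩ := orderOf_eq_prime_iff.1 hx
  exact orderOf_eq_prime (by rw [← map_pow, hpow, map_one])
    fun h => hne (eq_one_of_map_eq_one hf (k := 1) (by rwa [pow_one]) h)

theorem not_dvd_card_ker_mk' {N : Subgroup G} [N.Normal] (h : ¬ p ∣ Nat.card N) :
    ¬ p ∣ Nat.card (QuotientGroup.mk' N).ker := by
  rwa [QuotientGroup.ker_mk']

theorem dvd_card_map [Fact p.Prime] {f : G →* H} (hf : ¬ p ∣ Nat.card f.ker) {K : Subgroup G}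
    [Finite K] (h : p ∣ Nat.card K) : p ∣ Nat.card (K.map f) := by
  obtain ⟨x, hxK, hx⟩ := exists_mem_orderOf_eq_of_dvd_card h
  rw [← orderOf_map_eq_prime hf hx]
  exact Subgroup.orderOf_dvd_natCard _ (mem_map_of_mem f hxK)

end Order

section PrimeGraph

variable {G H : Type*} [Group G] [Group H] {p q : ℕ}

/-- Adjacency of `p` and `q` in the prime graph of `G`, for distinct primes `p` and `q`. -/
def PrimeGraphAdj (G : Type*) [Group G] (p q : ℕ) : Prop :=
  ∃ g : G, orderOf g = p * q

namespace PrimeGraphAdj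

theorem symm (h : PrimeGraphAdj G p q) : PrimeGraphAdj G q p := by
  rwa [PrimeGraphAdj, mul_comm]

theorem of_dvd_orderOf [Finite G] {g : G} (h : p * q ∣ orderOf g) : PrimeGraphAdj G p q :=
  ⟨_, orderOf_pow_orderOf_div (orderOf_pos g).ne' h⟩

theorem of_commute [Fact p.Prime] [Fact q.Prime] (hpq : p ≠ q) {x y : G} (hxy : Commute x y)
    (hx : orderOf x = p) (hy : orderOf y = q) : PrimeGraphAdj G p q := by
  have hcop : (orderOf x).Coprime (orderOf y) := by
    rw [hx, hy]
    exact (Nat.coprime_primes Fact.out Fact.out).2 hpq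
  exact ⟨x * y, by rw [hxy.orderOf_mul_eq_mul_orderOf_of_coprime hcop, hx, hy]⟩

theorem of_surjective [Finite G] {f : G →* H} (hf : Function.Surjective f)
    (h : PrimeGraphAdj H p q) : PrimeGraphAdj G p q := by
  obtain ⟨y, hy⟩ := h
  obtain ⟨x, rfl⟩ := hf y
  exact of_dvd_orderOf (hy ▸ orderOf_map_dvd f x)

theorem of_subgroup {K : Subgroup G} (h : PrimeGraphAdj K p q) : PrimeGraphAdj G p q := by
  obtain ⟨x, hx⟩ := h
  exact ⟨x, by rw [Subgroup.orderOf_coe, hx]⟩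

theorem of_dvd_card_abelianization [Finite G] [Fact p.Prime] [Fact q.Prime] (hpq : p ≠ q)
    (hp : p ∣ Nat.card (Abelianization G)) (hq : q ∣ Nat.card (Abelianization G)) :
    PrimeGraphAdj G p q := by
  obtain ⟨x, hx⟩ := exists_prime_orderOf_dvd_card' p hp
  obtain ⟨y, hy⟩ := exists_prime_orderOf_dvd_card' q hq
  exact of_surjective (f := Abelianization.of) (QuotientGroup.mk'_surjective _)
    (of_commute hpq (Commute.all x y) hx hy)

end PrimeGraphAdj

/-- The `p`-rank of `G` is at least two, i.e. `G` has a subgroup isomorphic to `C_p × C_p`; such a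
subgroup is encoded by two generators of order `p`. -/
def TwoLePRank (p : ℕ) (G : Type*) [Group G] : Prop :=
  ∃ a b : G, orderOf a = p ∧ orderOf b = p ∧ Commute a b ∧ b ∉ zpowers a

namespace TwoLePRank

theorem dvd_card (h : TwoLePRank p G) : p ∣ Nat.card G := by
  obtain ⟨a, -, ha, -⟩ := h
  exact ha ▸ orderOf_dvd_natCard a

theorem of_injective {f : G →* H} (hf : Function.Injective f) (h : TwoLePRank p G) :
    TwoLePRank p H := by
  obtain ⟨a, b, ha, hb, hab, hba⟩ := h
  refine ⟨f a, f b, by rw [orderOf_injective f hf, ha], by rw [orderOf_injective f hf, hb],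
    hab.map f, ?_⟩
  rwa [← MonoidHom.map_zpowers, mem_map_iff_mem hf]

theorem of_subgroup {K : Subgroup G} (h : TwoLePRank p K) : TwoLePRank p G :=
  h.of_injective K.subtype_injective

theorem map [Fact p.Prime] {f : G →* H} (hf : ¬ p ∣ Nat.card f.ker) (h : TwoLePRank p G) :
    TwoLePRank p H := by
  obtain ⟨a, b, ha, hb, hab, hba⟩ := h
  refine ⟨f a, f b, orderOf_map_eq_prime hf ha, orderOf_map_eq_prime hf hb, hab.map f, ?_⟩
  rintro ⟨k, hk : f a ^ k = f b⟩
  have hpow : (a ^ (-k) * b) ^ p = 1 := by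
    have hak : (a ^ (-k)) ^ p = 1 := by
      rw [← zpow_natCast, zpow_comm, zpow_natCast, ← ha, pow_orderOf_eq_one, one_zpow]
    rw [(hab.zpow_left (-k)).mul_pow, hak, one_mul, ← hb, pow_orderOf_eq_one]
  have hone : a ^ (-k) * b = 1 :=
    eq_one_of_map_eq_one hf (k := 1) (by rwa [pow_one]) (by simp [← hk])
  exact hba ⟨k, by rwa [zpow_neg, inv_mul_eq_one] at hone⟩

theorem exists_sylow (h : TwoLePRank p G) : ∃ P : Sylow p G, TwoLePRank p P := by
  obtain ⟨a, b, ha, hb, hab, hba⟩ := h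
  have hle : zpowers a ≤ Subgroup.normalizer (zpowers b : Set G) := by
    refine le_trans ?_ (centralizer_le_normalizer _)
    rw [zpowers_le, mem_centralizer_iff]
    rintro _ ⟨k, rfl⟩
    exact (hab.zpow_right k).symm.eq
  have hE : IsPGroup p (zpowers a ⊔ zpowers b : Subgroup G) :=
    IsPGroup.to_sup_of_normal_right' (IsPGroup.of_card (n := 1) (by simp [ha]))
      (IsPGroup.of_card (n := 1) (by simp [hb])) hle
  obtain ⟨P, hP⟩ := hE.exists_le_sylow
  have haP : a ∈ P := hP (mem_sup_left (mem_zpowers a))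
  have hbP : b ∈ P := hP (mem_sup_right (mem_zpowers b))
  refine ⟨P, ⟨a, haP⟩, ⟨b, hbP⟩, by rwa [Subgroup.orderOf_mk], by rwa [Subgroup.orderOf_mk],
    Subtype.ext hab, ?_⟩
  rintro ⟨k, hk⟩
  exact hba ⟨k, congrArg Subtype.val hk⟩

theorem of_surjective [Finite G] [Fact p.Prime] {f : G →* H} (hf : Function.Surjective f)
    (hker : ¬ p ∣ Nat.card f.ker) (h : TwoLePRank p H) : TwoLePRank p G := by
  have : Finite H := Finite.of_surjective f hf
  obtain ⟨Q, hQ⟩ := h.exists_sylow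
  obtain ⟨P, rfl⟩ := Sylow.mapSurjective_surjective hf p Q
  have hinj : Function.Injective (f.subgroupMap (P : Subgroup G)) := by
    rw [injective_iff_map_eq_one]
    intro x hx
    obtain ⟨k, hk⟩ := P.isPGroup' x
    exact Subtype.ext <| eq_one_of_map_eq_one hker (congrArg Subtype.val hk)
      (congrArg Subtype.val hx)
  let e := MulEquiv.ofBijective _ ⟨hinj, f.subgroupMap_surjective (P : Subgroup G)⟩
  exact (hQ.of_injective (f := e.symm.toMonoidHom) e.symm.injective).of_subgroup

end TwoLePRank

end PrimeGraph

theorem commutator_le_centralizer {G : Type*} [Group G] {Z M : Subgroup G} [IsCyclic Z]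
    (hM : M ≤ Subgroup.normalizer (Z : Set G)) : ⁅M, M⁆ ≤ centralizer (Z : Set G) := by
  rw [Subgroup.commutator_le]
  intro a ha b hb
  let a' : Subgroup.normalizer (Z : Set G) := ⟨a, hM ha⟩
  let b' : Subgroup.normalizer (Z : Set G) := ⟨b, hM hb⟩
  have hcomm : Z.normalizerMonoidHom a' * Z.normalizerMonoidHom b' =
      Z.normalizerMonoidHom b' * Z.normalizerMonoidHom a' :=
    (IsCyclic.mulAutMulEquiv Z).injective (by rw [map_mul, map_mul, mul_comm])
  have hker : ⁅a', b'⁆ ∈ Z.normalizerMonoidHom.ker := by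
    rwa [MonoidHom.mem_ker, map_commutatorElement, commutatorElement_eq_one_iff_mul_comm]
  rwa [normalizerMonoidHom_ker] at hker

section Perfect

variable {V S : Type*} [Group V] [Group S] {f : V →* S} {l r : ℕ}

theorem map_commutator_eq_top [Group.IsPerfect S] {H K : Subgroup V} (hH : H.map f = ⊤)
    (hK : K.map f = ⊤) : ⁅H, K⁆.map f = ⊤ := by
  rw [Subgroup.map_commutator, hH, hK, ← commutator_def, Group.IsPerfect.commutator_eq_top]

theorem map_finset_inf_eq_top [Group.IsPerfect S] (hf : Function.Surjective f) {ι : Type*}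
    {Q : ι → Subgroup V} [∀ i, (Q i).Normal] (s : Finset ι) (hQ : ∀ i ∈ s, (Q i).map f = ⊤) :
    (s.inf Q).map f = ⊤ := by
  classical
  induction s using Finset.induction_on with
  | empty => exact map_top_of_surjective f hf
  | insert i s _ ih =>
    have : (s.inf Q).Normal := by
      rw [Finset.inf_eq_iInf]
      exact normal_iInf_normal fun _ => normal_iInf_normal fun _ => inferInstance
    have hcomm : ⁅Q i, s.inf Q⁆.map f = ⊤ :=
      map_commutator_eq_top (hQ i (s.mem_insert_self i))
        (ih fun j hj => hQ j (Finset.mem_insert_of_mem hj))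
    rw [Finset.inf_insert, eq_top_iff, ← hcomm]
    exact map_mono (commutator_le_inf _ _)

theorem map_normalizer_sylow_ker_eq_top [Fact r.Prime] [Finite V] (hf : Function.Surjective f)
    (R : Sylow r f.ker) :
    (Subgroup.normalizer ((R : Subgroup f.ker).map f.ker.subtype : Set V)).map f = ⊤ := by
  have hfrattini := congrArg (Subgroup.map f) (Sylow.normalizer_sup_eq_top R)
  rwa [Subgroup.map_sup, (Subgroup.map_eq_bot_iff f.ker).2 le_rfl, sup_bot_eq,
    map_top_of_surjective f hf] at hfrattini

theorem exists_orderOf_eq_normalizer_le [Fact r.Prime] {W : Subgroup V} [Finite W] [Nontrivial W]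
    (hW : IsPGroup r W) (hV : ¬ TwoLePRank r V) :
    ∃ z : V, orderOf z = r ∧
      Subgroup.normalizer (W : Set V) ≤ Subgroup.normalizer (zpowers z : Set V) := by
  have hcenter : r ∣ Nat.card (center W) := by
    obtain ⟨n, hn, hcard⟩ := (hW.to_subgroup _).nontrivial_iff_card.1 hW.center_nontrivial
    exact hcard ▸ dvd_pow_self r hn.ne'
  obtain ⟨z, hzcenter, hz⟩ := exists_mem_orderOf_eq_of_dvd_card hcenter
  have hzV : orderOf (z : V) = r := by rw [Subgroup.orderOf_coe, hz]
  have hunique : ∀ y ∈ W, orderOf y = r → y ∈ zpowers (z : V) := by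
    intro y hyW hy
    by_contra hyz
    have hcomm := mem_center_iff.1 hzcenter ⟨y, hyW⟩
    exact hV ⟨z, y, hzV, hy, (congrArg Subtype.val hcomm).symm, hyz⟩
  refine ⟨z, hzV, ?_⟩
  rw [zpowers_eq_closure, le_normalizer_closure_iff, ← zpowers_eq_closure]
  rintro n hn _ rfl
  refine hunique _ ((mem_normalizer_iff.1 hn _).1 z.2) ?_
  rw [← MulAut.conj_apply, MulEquiv.orderOf_eq, hzV]

theorem PrimeGraphAdj.of_isPerfect_of_dvd_card_ker [Fact l.Prime] [Fact r.Prime] [Finite V]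
    [Group.IsPerfect S] (hf : Function.Surjective f) (hlr : l ≠ r) (hl : l ∣ Nat.card S)
    (hr : r ∣ Nat.card f.ker) (hV : ¬ TwoLePRank r V) : PrimeGraphAdj V l r := by
  obtain ⟨R⟩ : Nonempty (Sylow r f.ker) := inferInstance
  let W : Subgroup V := (R : Subgroup f.ker).map f.ker.subtype
  have hrW : r ∣ Nat.card W := by
    rw [Subgroup.card_map_of_injective f.ker.subtype_injective]
    exact R.dvd_card_of_dvd_card hr
  have : Nontrivial W := nontrivial_of_prime_dvd_card hrW
  obtain ⟨z, hz, hnormalizer⟩ := exists_orderOf_eq_normalizer_le (W := W) (R.isPGroup'.map _) hV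
  let M := Subgroup.normalizer (W : Set V)
  have hmap : ⁅M, M⁆.map f = ⊤ :=
    map_commutator_eq_top (map_normalizer_sylow_ker_eq_top hf R)
      (map_normalizer_sylow_ker_eq_top hf R)
  have hlM : l ∣ Nat.card (⁅M, M⁆ : Subgroup V) := by
    rw [← Subgroup.card_top, ← hmap] at hl
    exact hl.trans (Subgroup.card_map_dvd _ f)
  obtain ⟨y, hyM, hy⟩ := exists_mem_orderOf_eq_of_dvd_card hlM
  have hcomm := mem_centralizer_iff.1 (commutator_le_centralizer hnormalizer hyM)
  exact of_commute hlr (hcomm z (mem_zpowers z)).symm hy hz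

end Perfect

section CyclicNorm

variable {V S : Type*} [Group V] [Group S] {f : V →* S} {σ : MulAut V} {l n r : ℕ}

theorem exists_orderOf_eq_and_fixed [Finite V] [Fact r.Prime] (hσ : σ ^ r = 1)
    (hl : ¬ r ∣ Nat.card {v : V // orderOf v = l}) : ∃ v, orderOf v = l ∧ σ v = v := by
  have := Fintype.ofFinite {v : V // orderOf v = l}
  have horder : ∀ v, orderOf (MulAut.toPerm V σ v) = l ↔ orderOf v = l :=
    fun v => Eq.congr_left (MulEquiv.orderOf_eq σ v)
  have hpow : (MulAut.toPerm V σ).subtypePerm (p := fun v => orderOf v = l) horder ^ r ^ 1 = 1 := by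
    ext v
    simp only [pow_one, Equiv.Perm.subtypePerm_pow, ← map_pow, hσ, map_one,
      Equiv.Perm.subtypePerm_apply, Equiv.Perm.one_apply]
  rw [Nat.card_eq_fintype_card] at hl
  obtain ⟨v, hv⟩ := Equiv.Perm.exists_fixed_point_of_prime hl hpow
  exact ⟨v, v.2, congrArg Subtype.val hv⟩

/-- The product `m * σ m * ⋯ * σ ^ (n - 1) m`, in this order. For conjugation `σ` by `x` it is the
factor by which `(m * x) ^ n` differs from `x ^ n`. -/
def cyclicNorm (σ : MulAut V) (n : ℕ) (m : V) : V :=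
  ((List.range n).map fun i => (σ ^ i) m).prod

theorem cyclicNorm_succ (m : V) :
    cyclicNorm σ (n + 1) m = cyclicNorm σ n m * (σ ^ n) m := by
  simp only [cyclicNorm, List.range_succ, List.map_append, List.prod_append, List.map_cons,
    List.map_nil, List.prod_singleton]

theorem coe_cyclicNorm_conjNormal_mul_pow {G : Type*} [Group G] {N : Subgroup G} [N.Normal]
    (x : G) (m : N) (n : ℕ) :
    ((cyclicNorm (MulAut.conjNormal x) n m : N) : G) * x ^ n = ((m : G) * x) ^ n := by
  induction n with
  | zero => simp [cyclicNorm]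
  | succ n ih =>
    rw [pow_succ ((m : G) * x), ← ih, cyclicNorm_succ, Subgroup.coe_mul, ← map_pow,
      MulAut.conjNormal_apply]
    group

theorem map_cyclicNorm_of_fixed {m : V} (hm : ∀ i, f ((σ ^ i) m) = f m) :
    f (cyclicNorm σ n m) = f m ^ n := by
  simp only [cyclicNorm, map_list_prod, List.map_map, Function.comp_def, hm, List.map_const',
    List.length_range, List.prod_replicate]

theorem map_cyclicNorm_of_forall_eq_one (hn : n ≠ 0) {m : V}
    (hm : ∀ i, i ≠ 0 → i < n → f ((σ ^ i) m) = 1) : f (cyclicNorm σ n m) = f m := by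
  obtain ⟨k, rfl⟩ := Nat.exists_eq_succ_of_ne_zero hn
  induction k with
  | zero => simp [cyclicNorm]
  | succ k ih =>
    rw [cyclicNorm_succ, map_mul, hm (k + 1) k.succ_ne_zero (Nat.lt_succ_self _), mul_one]
    exact ih k.succ_ne_zero fun i hi hik => hm i hi (hik.trans (Nat.lt_succ_self _))

theorem exists_mulAut_apply_map [Finite S] (hf : Function.Surjective f)
    (hσ : ∀ v, f v = 1 → f (σ v) = 1) : ∃ α : MulAut S, ∀ v, α (f v) = f (σ v) := by
  let α : S →* S := f.liftOfSurjective hf ⟨f.comp σ.toMonoidHom, hσ⟩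
  have hα : ∀ v, α (f v) = f (σ v) :=
    fun v => MonoidHom.liftOfRightInverse_comp_apply f _ _ ⟨f.comp σ.toMonoidHom, hσ⟩ v
  have hsurj : Function.Surjective α := by
    intro s
    obtain ⟨v, rfl⟩ := hf s
    exact ⟨f (σ⁻¹ v), by rw [hα, MulAut.apply_inv_self]⟩
  exact ⟨MulEquiv.ofBijective α (Finite.surjective_iff_bijective.1 hsurj), hα⟩

theorem exists_orderOf_map_cyclicNorm_of_ker_invariant [Finite S] [Fact r.Prime]
    (hf : Function.Surjective f) (hσ : ∀ v, f v = 1 → f (σ v) = 1) (hσr : σ ^ r = 1)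
    (hlr : l.Coprime r) (hl : ¬ r ∣ Nat.card {s : S // orderOf s = l}) :
    ∃ m, orderOf (f (cyclicNorm σ r m)) = l := by
  obtain ⟨α, hα⟩ := exists_mulAut_apply_map hf hσ
  have hαpow : ∀ i v, (α ^ i) (f v) = f ((σ ^ i) v) := by
    intro i
    induction i with
    | zero => exact fun _ => rfl
    | succ i ih => exact fun v => by rw [pow_succ, pow_succ, MulAut.mul_apply, hα, ih]; rfl
  have hαr : α ^ r = 1 := by
    ext s
    obtain ⟨v, rfl⟩ := hf s
    rw [hαpow, hσr]
    rfl
  obtain ⟨s, hs, hfixed⟩ := exists_orderOf_eq_and_fixed hαr hl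
  obtain ⟨m, rfl⟩ := hf s
  have hm : ∀ i, f ((σ ^ i) m) = f m := by
    intro i
    rw [← hαpow]
    exact pow_mem (show α ∈ MulAction.stabilizer (MulAut S) (f m) from hfixed) i
  exact ⟨m, by rw [map_cyclicNorm_of_fixed hm, Nat.Coprime.orderOf_pow (hs ▸ hlr), hs]⟩

theorem map_eq_one_of_map_pow_eq_one [Fact r.Prime] (hσr : σ ^ r = 1) {i : ℕ} (hi : i ≠ 0)
    (hir : i < r) (h : ∀ v, f ((σ ^ i) v) = 1 → f v = 1) {v : V} (hv : f v = 1) :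
    f (σ v) = 1 := by
  let T : Submonoid (MulAut V) :=
    { carrier := {τ | ∀ v, f (τ v) = 1 → f v = 1}
      one_mem' := fun _ => id
      mul_mem' := fun hσ hτ v hv => hτ v (hσ _ hv) }
  have hgcd : i.gcd (orderOf σ) = 1 :=
    (Nat.coprime_of_lt_prime hi hir Fact.out).symm.coprime_dvd_right (orderOf_dvd_of_pow_eq_one hσr)
  have hfin : IsOfFinOrder (σ ^ i) :=
    (isOfFinOrder_iff_pow_eq_one.2 ⟨r, (Fact.out : r.Prime).pos, hσr⟩).pow
  have hinv : σ⁻¹ ∈ T := by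
    have hmem := hfin.mem_powers_iff_mem_zpowers.2 (inv_mem (mem_zpowers_pow_iff.2 hgcd))
    exact Submonoid.powers_le.2 (show σ ^ i ∈ T from h) hmem
  exact hinv _ (by rwa [MulAut.inv_apply_self])

theorem exists_map_cyclicNorm_eq_of_not_ker_invariant [IsSimpleGroup S] [Group.IsPerfect S]
    [Fact r.Prime] (hf : Function.Surjective f) (hσ : ¬ ∀ v, f v = 1 → f (σ v) = 1)
    (hσr : σ ^ r = 1) (s : S) : ∃ m, f (cyclicNorm σ r m) = s := by
  let Q : ℕ → Subgroup V := fun i => (f.comp (σ ^ i).toMonoidHom).ker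
  have hQ : ∀ i, i ≠ 0 → i < r → (Q i).map f = ⊤ := by
    intro i hi hir
    have : ((Q i).map f).Normal := Subgroup.Normal.map inferInstance f hf
    refine (IsSimpleGroup.eq_bot_or_eq_top_of_normal _ this).resolve_left fun hbot => hσ ?_
    exact fun v => map_eq_one_of_map_pow_eq_one hσr hi hir ((Subgroup.map_eq_bot_iff _).1 hbot)
  have htop : ((Finset.Ioo 0 r).inf Q).map f = ⊤ :=
    map_finset_inf_eq_top hf _ fun i hi =>
      hQ i (Finset.mem_Ioo.1 hi).1.ne' (Finset.mem_Ioo.1 hi).2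
  obtain ⟨m, hm, rfl⟩ : s ∈ ((Finset.Ioo 0 r).inf Q).map f := htop ▸ mem_top s
  refine ⟨m, map_cyclicNorm_of_forall_eq_one (Fact.out : r.Prime).ne_zero fun i hi hir => ?_⟩
  exact Finset.inf_le (f := Q) (Finset.mem_Ioo.2 ⟨Nat.pos_of_ne_zero hi, hir⟩) hm

theorem exists_orderOf_map_cyclicNorm_eq [Finite S] [IsSimpleGroup S] [Group.IsPerfect S]
    [Fact l.Prime] [Fact r.Prime] (hf : Function.Surjective f) (hσr : σ ^ r = 1) (hlr : l ≠ r)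
    (hlS : l ∣ Nat.card S) (hl : ¬ r ∣ Nat.card {s : S // orderOf s = l}) :
    ∃ m, orderOf (f (cyclicNorm σ r m)) = l := by
  by_cases hσ : ∀ v, f v = 1 → f (σ v) = 1
  · exact exists_orderOf_map_cyclicNorm_of_ker_invariant hf hσ hσr
      ((Nat.coprime_primes Fact.out Fact.out).2 hlr) hl
  · obtain ⟨s, hs⟩ := exists_prime_orderOf_dvd_card' l hlS
    obtain ⟨m, rfl⟩ := exists_map_cyclicNorm_eq_of_not_ker_invariant hf hσ hσr s
    exact ⟨m, hs⟩

theorem PrimeGraphAdj.of_isSimpleGroup_of_not_dvd_card {G : Type*} [Group G] [Finite G]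
    {N : Subgroup G} [N.Normal] [Finite S] [IsSimpleGroup S] [Group.IsPerfect S]
    [Fact l.Prime] [Fact r.Prime] {f : N →* S} (hf : Function.Surjective f) (hlr : l ≠ r)
    (hlS : l ∣ Nat.card S) (hl : ¬ r ∣ Nat.card {s : S // orderOf s = l})
    (hr : r ∣ Nat.card G) (hrN : ¬ r ∣ Nat.card N) : PrimeGraphAdj G l r := by
  obtain ⟨x, hx⟩ := exists_prime_orderOf_dvd_card' r hr
  have hxr : x ^ r = 1 := hx ▸ pow_orderOf_eq_one x
  obtain ⟨m, hm⟩ := exists_orderOf_map_cyclicNorm_eq (σ := MulAut.conjNormal x) hf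
    (by rw [← map_pow, hxr, map_one]) hlr hlS hl
  have hpow : ((cyclicNorm (MulAut.conjNormal x) r m : N) : G) = ((m : G) * x) ^ r := by
    rw [← coe_cyclicNorm_conjNormal_mul_pow, hxr, mul_one]
  have hl_dvd : l ∣ orderOf ((m : G) * x) :=
    calc l = orderOf (f (cyclicNorm (MulAut.conjNormal x) r m)) := hm.symm
      _ ∣ orderOf (cyclicNorm (MulAut.conjNormal x) r m) := orderOf_map_dvd f _
      _ = orderOf (((m : G) * x) ^ r) := by rw [← Subgroup.orderOf_coe, hpow]
      _ ∣ orderOf ((m : G) * x) := orderOf_pow_dvd r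
  have hmN : QuotientGroup.mk' N (m : G) = 1 := (QuotientGroup.eq_one_iff (m : G)).2 m.2
  have hr_dvd : r ∣ orderOf ((m : G) * x) :=
    calc r = orderOf (QuotientGroup.mk' N x) :=
          (orderOf_map_eq_prime (not_dvd_card_ker_mk' hrN) hx).symm
      _ = orderOf (QuotientGroup.mk' N (m * x)) := by
          rw [map_mul, hmN, one_mul]
      _ ∣ orderOf ((m : G) * x) := orderOf_map_dvd _ _
  exact of_dvd_orderOf <|
    ((Nat.coprime_primes Fact.out Fact.out).2 hlr).mul_dvd_of_dvd_of_dvd hl_dvd hr_dvd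

end CyclicNorm

section AlternatingGroup

local notation "A₅" => alternatingGroup (Fin 5)

variable {G : Type*} [Group G] {l r : ℕ}

instance isPerfect_alternatingGroup_five : Group.IsPerfect A₅ :=
  ⟨commutator_alternatingGroup_eq_top (by simp)⟩

theorem nat_card_alternatingGroup_five : Nat.card A₅ = 60 := by
  rw [nat_card_alternatingGroup, Nat.card_eq_fintype_card, Fintype.card_fin]
  rfl

theorem eq_two_or_three_or_five_of_dvd_sixty (hl : l.Prime) (h : l ∣ 60) :
    l = 2 ∨ l = 3 ∨ l = 5 := by
  have hmem : l ∈ Nat.primeFactors 60 := Nat.mem_primeFactors.2 ⟨hl, h, by norm_num⟩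
  have hfactors : Nat.primeFactors 60 = {2, 3, 5} := by
    rw [show 60 = 2 ^ 2 * 3 * 5 by norm_num]
    decide +kernel
  simpa only [hfactors, Finset.mem_insert, Finset.mem_singleton] using hmem

theorem card_orderOf_eq_alternatingGroup_five_dvd [Fact l.Prime] (hl : l ∣ 60) :
    Nat.card {a : A₅ // orderOf a = l} ∣ 60 ^ 2 := by
  have hcard : Nat.card {a : A₅ // orderOf a = l} =
      Fintype.card {a : A₅ // a ^ l = 1 ∧ a ≠ 1} := by
    rw [← Nat.card_eq_fintype_card]
    exact Nat.card_congr (Equiv.subtypeEquivRight fun _ => orderOf_eq_prime_iff)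
  rw [hcard]
  rcases eq_two_or_three_or_five_of_dvd_sixty Fact.out hl with rfl | rfl | rfl <;> decide +kernel

theorem TwoLePRank.of_orderOf_eq_two {a b : G} (ha : orderOf a = 2) (hb : orderOf b = 2)
    (hab : Commute a b) (hne : a ≠ b) : TwoLePRank 2 G := by
  refine ⟨a, b, ha, hb, hab, ?_⟩
  rintro ⟨k, hk : a ^ k = b⟩
  have hsq : a ^ (2 : ℤ) = 1 := by exact_mod_cast ha ▸ pow_orderOf_eq_one a
  obtain ⟨m, rfl | rfl⟩ := k.even_or_odd'
  · rw [zpow_mul, hsq, one_zpow] at hk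
    simp [← hk] at hb
  · rw [zpow_add, zpow_mul, hsq, one_zpow, one_mul, zpow_one] at hk
    exact hne hk

theorem twoLePRank_two_alternatingGroup_five : TwoLePRank 2 A₅ := by
  let a : A₅ := ⟨Equiv.swap 0 1 * Equiv.swap 2 3, Equiv.Perm.mem_alternatingGroup.2 (by decide)⟩
  let b : A₅ := ⟨Equiv.swap 0 2 * Equiv.swap 1 3, Equiv.Perm.mem_alternatingGroup.2 (by decide)⟩
  have hab : a * b = b * a := by decide
  exact .of_orderOf_eq_two (orderOf_eq_prime (x := a) (by decide) (by decide))
    (orderOf_eq_prime (x := b) (by decide) (by decide)) hab (by decide)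

theorem not_surjective_alternatingGroup_five [Group.IsSolvable G] {N : Subgroup G} {f : N →* A₅} :
    ¬ Function.Surjective f := fun hf =>
  Group.IsPerfect.not_isSolvable A₅ (Group.isSolvable_of_surjective hf)

theorem card_eq_sixty_mul_card_ker {f : G →* A₅} (hf : Function.Surjective f) :
    Nat.card G = 60 * Nat.card f.ker := by
  rw [f.ker.card_eq_card_quotient_mul_card_subgroup,
    Nat.card_congr (QuotientGroup.quotientKerEquivOfSurjective f hf).toEquiv,
    nat_card_alternatingGroup_five]

variable [Finite G] [Fact l.Prime] [Fact r.Prime]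

theorem PrimeGraphAdj.of_alternatingGroup_five_of_not_dvd_card {N : Subgroup G} [N.Normal]
    {f : N →* A₅} (hf : Function.Surjective f) (hl : l ∣ 60) (hr60 : ¬ r ∣ 60)
    (hr : r ∣ Nat.card G) (hrN : ¬ r ∣ Nat.card N) : PrimeGraphAdj G l r :=
  .of_isSimpleGroup_of_not_dvd_card hf (fun h => hr60 (h ▸ hl))
    (by rwa [nat_card_alternatingGroup_five])
    (fun h => hr60 ((Fact.out : r.Prime).dvd_of_dvd_pow
      (h.trans (card_orderOf_eq_alternatingGroup_five_dvd hl)))) hr hrN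

theorem PrimeGraphAdj.of_alternatingGroup_five_of_not_twoLePRank {N : Subgroup G} [N.Normal]
    {f : N →* A₅} (hf : Function.Surjective f) (hl : l ∣ 60) (hr60 : ¬ r ∣ 60)
    (hr : r ∣ Nat.card G) (hrank : ¬ TwoLePRank r G) : PrimeGraphAdj G l r := by
  have hlr : l ≠ r := fun h => hr60 (h ▸ hl)
  by_cases hrN : r ∣ Nat.card N
  · have hker : r ∣ Nat.card f.ker := by
      rw [card_eq_sixty_mul_card_ker hf] at hrN
      exact ((Fact.out : r.Prime).dvd_mul.1 hrN).resolve_left hr60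
    exact (of_isPerfect_of_dvd_card_ker hf hlr
      (by rwa [nat_card_alternatingGroup_five]) hker fun h => hrank h.of_subgroup).of_subgroup
  · exact of_alternatingGroup_five_of_not_dvd_card hf hl hr60 hr hrN

theorem PrimeGraphAdj.three_two_of_alternatingGroup_five {f : G →* A₅}
    (hf : Function.Surjective f) (hrank : ¬ TwoLePRank 2 G) : PrimeGraphAdj G 3 2 := by
  have htwo : 2 ∣ Nat.card f.ker :=
    not_not.1 fun h => hrank (twoLePRank_two_alternatingGroup_five.of_surjective hf h)
  exact of_isPerfect_of_dvd_card_ker hf (by norm_num)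
    (by rw [nat_card_alternatingGroup_five]; norm_num) htwo hrank

end AlternatingGroup

section PseudoSolvable

variable {G H Q S : Type*} [Group G] [Group H] [Group Q] [Group S]

theorem subsingleton_or_nonempty_mulEquiv_of_surjective [IsSimpleGroup S] {f : S →* Q}
    (hf : Function.Surjective f) : Subsingleton Q ∨ Nonempty (S ≃* Q) := by
  rcases IsSimpleGroup.eq_bot_or_eq_top_of_normal f.ker inferInstance with hker | hker
  · exact .inr ⟨MulEquiv.ofBijective f ⟨(MonoidHom.ker_eq_bot_iff f).1 hker, hf⟩⟩
  · left
    rw [MonoidHom.ker_eq_top_iff] at hker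
    exact subsingleton_of_forall_eq 1 fun y => by
      obtain ⟨x, rfl⟩ := hf y
      rw [hker, MonoidHom.one_apply]

theorem subgroupOf_map_normal {f : G →* H} {K L : Subgroup G} (hKL : K ≤ L)
    [hK : (K.subgroupOf L).Normal] : ((K.map f).subgroupOf (L.map f)).Normal := by
  rw [normal_subgroupOf_iff_le_normalizer (map_mono hKL)]
  exact (map_mono ((normal_subgroupOf_iff_le_normalizer hKL).1 hK)).trans (le_normalizer_map f)

theorem exists_surjective_quotient_map {f : G →* H} {K L : Subgroup G}
    [(K.subgroupOf L).Normal] [((K.map f).subgroupOf (L.map f)).Normal] :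
    ∃ g : L ⧸ K.subgroupOf L →* L.map f ⧸ (K.map f).subgroupOf (L.map f),
      Function.Surjective g := by
  refine ⟨QuotientGroup.map _ _ (f.subgroupMap L) fun x hx => mem_map_of_mem f hx, ?_⟩
  exact QuotientGroup.map_surjective_of_surjective _ _ _
    ((QuotientGroup.mk'_surjective _).comp (f.subgroupMap_surjective L)) _

theorem IsPseudoSolvable.of_surjective (hG : IsPseudoSolvable G) {f : G →* H}
    (hf : Function.Surjective f) : IsPseudoSolvable H := by
  obtain ⟨n, K, hbot, htop, hfactor⟩ := hG
  refine ⟨n, fun i => (K i).map f, by simp only [hbot, Subgroup.map_bot],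
    by simp only [htop, map_top_of_surjective f hf], fun i => ?_⟩
  obtain ⟨hle, hnormal, hcases⟩ := hfactor i
  have hnormal' := subgroupOf_map_normal (f := f) hle
  refine ⟨map_mono hle, hnormal', ?_⟩
  obtain ⟨g, hg⟩ := exists_surjective_quotient_map (f := f) (K := K i.castSucc) (L := K i.succ)
  rcases hcases with hcyclic | ⟨⟨e⟩⟩
  · exact .inl (isCyclic_of_surjective g hg)
  · rcases subsingleton_or_nonempty_mulEquiv_of_surjective
      (f := g.comp e.symm.toMonoidHom) (hg.comp e.symm.surjective) with h | ⟨⟨e'⟩⟩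
    · exact .inl inferInstance
    · exact .inr ⟨e'.symm⟩

theorem IsPseudoSolvable.exists_surjective_of_isPerfect (hG : IsPseudoSolvable G) (V : Subgroup G)
    [V.Normal] [Group.IsPerfect V] [Nontrivial V] :
    ∃ f : V →* alternatingGroup (Fin 5), Function.Surjective f := by
  obtain ⟨n, K, hbot, htop, hfactor⟩ := hG
  obtain ⟨i, hlower, hupper⟩ : ∃ i : Fin n, ¬ V ≤ K i.castSucc ∧ V ≤ K i.succ := by
    by_contra! hjump
    have hnot : ∀ i, ¬ V ≤ K i := fun i => by
      induction i using Fin.induction with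
      | zero => rwa [hbot, le_bot_iff, ← ne_eq, ← Subgroup.nontrivial_iff_ne_bot]
      | succ i ih => exact hjump i ih
    exact hnot _ (htop ▸ le_top)
  obtain ⟨-, hnormal, hcases⟩ := hfactor i
  let g : V →* K i.succ ⧸ (K i.castSucc).subgroupOf (K i.succ) :=
    (QuotientGroup.mk' _).comp (inclusion hupper)
  have hrange : g.range.Normal := by
    rw [MonoidHom.range_comp, inclusion_range]
    exact Subgroup.Normal.map inferInstance _ (QuotientGroup.mk'_surjective _)
  have hg : Nontrivial g.range := by
    rw [Subgroup.nontrivial_iff_ne_bot, ne_eq, MonoidHom.range_eq_bot_iff]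
    refine fun hone => hlower fun x hx => ?_
    have hx : (QuotientGroup.mk' ((K i.castSucc).subgroupOf (K i.succ))) ⟨x, hupper hx⟩ = 1 :=
      DFunLike.congr_fun hone ⟨x, hx⟩
    rwa [← MonoidHom.mem_ker, QuotientGroup.ker_mk'] at hx
  have hperfect : Group.IsPerfect g.range := .range g
  rcases hcases with hcyclic | ⟨⟨e⟩⟩
  · exact (Group.IsPerfect.not_isMulCommutative g.range inferInstance).elim
  · have := e.isSimpleGroup_congr.2 inferInstance
    have htop := (IsSimpleGroup.eq_bot_or_eq_top_of_normal _ hrange).resolve_left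
      ((Subgroup.nontrivial_iff_ne_bot _).1 hg)
    exact ⟨e.toMonoidHom.comp g, e.surjective.comp (MonoidHom.range_eq_top.1 htop)⟩

theorem exists_normal_isPerfect_nontrivial [Finite G] (hG : ¬ Group.IsSolvable G) :
    ∃ V : Subgroup G, V.Normal ∧ Group.IsPerfect V ∧ Nontrivial V := by
  obtain ⟨n, hn⟩ := WellFoundedGT.monotone_chain_condition
    (⟨fun n => OrderDual.toDual (derivedSeries G n), fun _ _ h => derivedSeries_antitone G h⟩ :
      ℕ →o (Subgroup G)ᵒᵈ)
  have hstable : derivedSeries G n = derivedSeries G (n + 1) := hn (n + 1) n.le_succ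
  refine ⟨derivedSeries G n, inferInstance, Subgroup.isPerfect_iff.2 hstable.symm, ?_⟩
  rw [Subgroup.nontrivial_iff_ne_bot]
  exact fun hbot => hG ⟨n, hbot⟩

end PseudoSolvable

section MinimalNormal

variable {G S : Type*} [Group G] [Group S] {N : Subgroup G} {p q r : ℕ}

/-- `N` is an elementary abelian `p`-subgroup (possibly trivial), when `p` is prime. -/
structure IsElementaryAbelian (p : ℕ) (N : Subgroup G) : Prop where
  isMulCommutative : IsMulCommutative N
  pow_eq_one : ∀ x ∈ N, x ^ p = 1

theorem IsElementaryAbelian.orderOf_eq [Fact p.Prime] (hN : IsElementaryAbelian p N) {x : G}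
    (hx : x ∈ N) (hx₁ : x ≠ 1) : orderOf x = p :=
  orderOf_eq_prime (hN.pow_eq_one x hx) hx₁

/-- `N` is a minimal normal subgroup of `G`, that is, minimal among the nontrivial ones. -/
def IsMinimalNormal (N : Subgroup G) : Prop :=
  Minimal (fun M : Subgroup G => M.Normal ∧ M ≠ ⊥) N

theorem exists_isMinimalNormal (G : Type*) [Group G] [Finite G] [Nontrivial G] :
    ∃ N : Subgroup G, IsMinimalNormal N :=
  exists_minimal_of_wellFoundedLT _ ⟨⊤, inferInstance, top_ne_bot⟩

namespace IsMinimalNormal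

theorem le_of_forall_conj_mem (hN : IsMinimalNormal N) {K : Subgroup G} {x : G} (hxN : x ∈ N)
    (hx : x ≠ 1) (hK : ∀ g, g * x * g⁻¹ ∈ K) : N ≤ K := by
  have : N.Normal := hN.prop.1
  have hxcl : x ∈ normalClosure {x} := subset_normalClosure rfl
  have hne : normalClosure {x} ≠ ⊥ := fun h => hx (by rwa [h, mem_bot] at hxcl)
  have hle : normalClosure {x} ≤ N := normalClosure_le_normal (Set.singleton_subset_iff.2 hxN)
  refine (hN.le_of_le ⟨inferInstance, hne⟩ hle).trans ((closure_le K).2 ?_)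
  intro y hy
  obtain ⟨_, rfl, hconj⟩ := Group.mem_conjugatesOfSet_iff.1 hy
  obtain ⟨g, rfl⟩ := isConj_iff.1 hconj
  exact hK g

theorem exists_isElementaryAbelian [Finite G] (hN : IsMinimalNormal N)
    [hcomm : IsMulCommutative N] :
    ∃ p, p.Prime ∧ IsElementaryAbelian p N := by
  open scoped IsMulCommutative in
  have : N.Normal := hN.prop.1
  obtain ⟨p, hp, hpN⟩ := Nat.exists_prime_and_dvd ((one_lt_card_iff_ne_bot N).2 hN.prop.2).ne'
  have : Fact p.Prime := ⟨hp⟩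
  obtain ⟨x, hx⟩ := exists_prime_orderOf_dvd_card' p hpN
  obtain ⟨hpow, hne⟩ := orderOf_eq_prime_iff.1 hx
  have hle : N ≤ (powMonoidHom p : N →* N).ker.map N.subtype := by
    refine hN.le_of_forall_conj_mem x.2 (by simpa using hne) fun g => ?_
    refine ⟨MulAut.conjNormal g x, ?_, MulAut.conjNormal_apply g x⟩
    simp [← map_pow, hpow]
  refine ⟨p, hp, hcomm, fun y hy => ?_⟩
  obtain ⟨y, hker, rfl⟩ := hle hy
  exact congrArg Subtype.val hker

theorem dvd_card_of_dvd_card [Finite G] (hN : IsMinimalNormal N) [Nontrivial S]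
    [Fact r.Prime] {f : N →* S} (hf : Function.Surjective f) (hr : r ∣ Nat.card N) :
    r ∣ Nat.card S := by
  have : N.Normal := hN.prop.1
  by_contra hrS
  obtain ⟨x, hx⟩ := exists_prime_orderOf_dvd_card' r hr
  obtain ⟨hpow, hne⟩ := orderOf_eq_prime_iff.1 hx
  have hle : N ≤ f.ker.map N.subtype := by
    refine hN.le_of_forall_conj_mem x.2 (by simpa using hne) fun g => ?_
    refine ⟨MulAut.conjNormal g x, ?_, MulAut.conjNormal_apply g x⟩
    have hdvd : orderOf (f (MulAut.conjNormal g x)) ∣ r :=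
      orderOf_dvd_of_pow_eq_one (by rw [← map_pow, ← map_pow, hpow, map_one, map_one])
    exact orderOf_eq_one_iff.1 <| Nat.eq_one_of_dvd_coprimes
      ((Fact.out : r.Prime).coprime_iff_not_dvd.2 hrS) hdvd (orderOf_dvd_natCard _)
  obtain ⟨s, hs⟩ := exists_ne (1 : S)
  obtain ⟨v, rfl⟩ := hf s
  obtain ⟨w, hw, hwv⟩ := hle v.2
  exact hs (Subtype.ext hwv ▸ hw)

theorem isMulCommutative_or_isPerfect (hN : IsMinimalNormal N) :
    IsMulCommutative N ∨ Group.IsPerfect N := by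
  have : N.Normal := hN.prop.1
  rcases eq_or_ne ⁅N, N⁆ ⊥ with hbot | hbot
  · left
    rw [← le_centralizer_iff_isMulCommutative]
    exact commutator_eq_bot_iff_le_centralizer.1 hbot
  · have hle := commutator_le_self N
    exact .inr (Subgroup.isPerfect_iff.2 (hle.antisymm (hN.le_of_le ⟨inferInstance, hbot⟩ hle)))

theorem isElementaryAbelian_or_exists_surjective_alternatingGroup [Finite G]
    (hG : IsPseudoSolvable G) (hN : IsMinimalNormal N) :
    (∃ p, p.Prime ∧ IsElementaryAbelian p N) ∨
      ∃ f : N →* alternatingGroup (Fin 5), Function.Surjective f := by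
  have : N.Normal := hN.prop.1
  have : Nontrivial N := (Subgroup.nontrivial_iff_ne_bot N).2 hN.prop.2
  rcases hN.isMulCommutative_or_isPerfect with hcomm | hperfect
  · exact .inl hN.exists_isElementaryAbelian
  · exact .inr (hG.exists_surjective_of_isPerfect N)

end IsMinimalNormal

theorem quotient_induction {P : ∀ (G : Type u) [Group G] [Finite G], Prop}
    (ih : ∀ (G : Type u) [Group G] [Finite G],
      (∀ N : Subgroup G, [N.Normal] → N ≠ ⊥ → P (G ⧸ N)) → P G)
    (G : Type u) [Group G] [Finite G] : P G := by
  induction hn : Nat.card G using Nat.strong_induction_on generalizing G with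
  | h n hlt =>
    refine ih G fun N _ hN => hlt _ ?_ (G ⧸ N) rfl
    rw [← hn, N.card_eq_card_quotient_mul_card_subgroup]
    exact lt_mul_of_one_lt_right Nat.card_pos ((one_lt_card_iff_ne_bot N).2 hN)

end MinimalNormal

section Actions

theorem prod_range_pow_apply_eq_one {A : Type*} [CommGroup A] {σ : MulAut A} {n : ℕ}
    (hσ : σ ^ n = 1) (hfixed : ∀ a, σ a = a → a = 1) (a : A) :
    ∏ j ∈ Finset.range n, (σ ^ j) a = 1 := by
  apply hfixed
  have hshift : ∀ j, σ ((σ ^ j) a) = (σ ^ (j + 1)) a := fun j => by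
    rw [pow_succ', MulAut.mul_apply]
  have hprod := Finset.prod_range_succ' (fun j => (σ ^ j) a) n
  rw [Finset.prod_range_succ, hσ, pow_zero, mul_left_inj] at hprod
  rw [map_prod, Finset.prod_congr rfl fun j _ => hshift j, hprod]

/-- In `∏ i j, (σ ^ i * τ) ^ j a`, the factors with `j ≠ 0` cancel when multiplied over `i`, while
all factors with a given `i` cancel when multiplied over `j`. -/
theorem pow_eq_one_of_commute_of_fixedPointFree {A : Type*} [CommGroup A] {σ τ : MulAut A} {q : ℕ}
    (hστ : Commute σ τ) (hq : 0 < q) (hσ : σ ^ q = 1) (hτ : τ ^ q = 1)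
    (hσfixed : ∀ j, j ≠ 0 → j < q → ∀ a, (σ ^ j) a = a → a = 1)
    (hτfixed : ∀ i a, (σ ^ i * τ) a = a → a = 1) (a : A) : a ^ q = 1 := by
  have hσpow : ∀ j, (σ ^ j) ^ q = 1 := fun j => by rw [pow_right_comm, hσ, one_pow]
  have hrow : ∀ i, ∏ j ∈ Finset.range q, ((σ ^ i * τ) ^ j) a = 1 := fun i =>
    prod_range_pow_apply_eq_one (by rw [(hστ.pow_left i).mul_pow, hτ, hσpow, one_mul])
      (hτfixed i) a
  have hcolumn : ∀ j ∈ Finset.range q, j ≠ 0 →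
      ∏ i ∈ Finset.range q, ((σ ^ i * τ) ^ j) a = 1 := by
    intro j hj hj₀
    have hpow : ∀ i, ((σ ^ i * τ) ^ j) a = ((σ ^ j) ^ i) ((τ ^ j) a) := fun i => by
      rw [(hστ.pow_left i).mul_pow, pow_right_comm, MulAut.mul_apply]
    simp only [hpow]
    exact prod_range_pow_apply_eq_one (hσpow j) (hσfixed j hj₀ (Finset.mem_range.1 hj)) _
  calc a ^ q = ∏ i ∈ Finset.range q, ((σ ^ i * τ) ^ 0) a := by
        simp only [pow_zero, MulAut.one_apply, Finset.prod_const, Finset.card_range]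
    _ = ∏ j ∈ Finset.range q, ∏ i ∈ Finset.range q, ((σ ^ i * τ) ^ j) a :=
        (Finset.prod_eq_single 0 hcolumn fun h => absurd (Finset.mem_range.2 hq) h).symm
    _ = 1 := by rw [Finset.prod_comm]; exact Finset.prod_eq_one fun i _ => hrow i

variable {G : Type*} [Group G] {N : Subgroup G} [N.Normal] {q r : ℕ} [Fact q.Prime] [Fact r.Prime]

namespace IsElementaryAbelian

theorem eq_one_of_conjNormal_apply_eq (hN : IsElementaryAbelian r N) (hqr : q ≠ r)
    (hadj : ¬ PrimeGraphAdj G q r) {x : G} (hx : x ^ q = 1) (hx₁ : x ≠ 1) {v : N}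
    (hv : MulAut.conjNormal x v = v) : v = 1 := by
  by_contra hv₁
  have hconj : x * v * x⁻¹ = v := by rw [← MulAut.conjNormal_apply, hv]
  exact hadj <| .of_commute hqr (mul_inv_eq_iff_eq_mul.1 hconj) (orderOf_eq_prime hx hx₁)
    (hN.orderOf_eq v.2 fun h => hv₁ (Subtype.ext h))

theorem primeGraphAdj_of_twoLePRank (hN : IsElementaryAbelian r N) (hbot : N ≠ ⊥) (hqr : q ≠ r)
    (hG : TwoLePRank q G) : PrimeGraphAdj G q r := by
  have := hN.isMulCommutative
  open scoped IsMulCommutative in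
  by_contra hadj
  obtain ⟨a, b, ha, hb, hab, hba⟩ := hG
  have haq : a ^ q = 1 := ha ▸ pow_orderOf_eq_one a
  have hbq : b ^ q = 1 := hb ▸ pow_orderOf_eq_one b
  have haq' : ∀ j, (a ^ j) ^ q = 1 := fun j => by rw [pow_right_comm, haq, one_pow]
  have hpow : ∀ v : N, v ^ q = 1 := by
    refine pow_eq_one_of_commute_of_fixedPointFree (hab.map MulAut.conjNormal)
      (Fact.out : q.Prime).pos (by rw [← map_pow, haq, map_one]) (by rw [← map_pow, hbq, map_one])
      (fun j hj₀ hj v hv => ?_) fun i v hv => ?_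
    · rw [← map_pow] at hv
      exact hN.eq_one_of_conjNormal_apply_eq hqr hadj (haq' j)
        (pow_ne_one_of_lt_orderOf hj₀ (ha.symm ▸ hj)) hv
    · rw [← map_pow, ← map_mul] at hv
      refine hN.eq_one_of_conjNormal_apply_eq hqr hadj
        (by rw [(hab.pow_left i).mul_pow, haq', hbq, one_mul]) (fun h => hba ?_) hv
      rw [mul_eq_one_iff_inv_eq] at h
      exact h ▸ inv_mem (pow_mem (mem_zpowers a) i)
  obtain ⟨v, hv, hv₁⟩ := N.bot_or_exists_ne_one.resolve_left hbot
  have hrq : r ∣ q := hN.orderOf_eq hv hv₁ ▸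
    orderOf_dvd_of_pow_eq_one (congrArg Subtype.val (hpow ⟨v, hv⟩))
  exact hqr ((Nat.prime_dvd_prime_iff_eq Fact.out Fact.out).1 hrq).symm

theorem isCyclic_of_not_twoLePRank (hN : IsElementaryAbelian q N) (hG : ¬ TwoLePRank q G) :
    IsCyclic N := by
  rcases eq_or_ne N ⊥ with rfl | hbot
  · infer_instance
  obtain ⟨z, hz, hz₁⟩ := N.bot_or_exists_ne_one.resolve_left hbot
  have := hN.isMulCommutative
  have hN' : N ≤ zpowers z := by
    intro y hy
    by_contra hyz
    have hy₁ : y ≠ 1 := fun h => hyz (h ▸ one_mem _)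
    exact hG ⟨z, y, hN.orderOf_eq hz hz₁, hN.orderOf_eq hy hy₁,
      setLike_mul_comm hz hy, hyz⟩
  exact isCyclic_of_injective (inclusion hN') (inclusion_injective hN')

theorem primeGraphAdj_of_not_twoLePRank [Finite G] (hN : IsElementaryAbelian q N) (hbot : N ≠ ⊥)
    (hqr : q ≠ r) (hG : ¬ TwoLePRank q G) (hr : r ∣ Nat.card (commutator G)) :
    PrimeGraphAdj G q r := by
  obtain ⟨z, hz, hz₁⟩ := N.bot_or_exists_ne_one.resolve_left hbot
  obtain ⟨y, hy, hyr⟩ := exists_mem_orderOf_eq_of_dvd_card hr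
  have := hN.isCyclic_of_not_twoLePRank hG
  have hle : commutator G ≤ centralizer (N : Set G) :=
    commutator_le_centralizer (le_of_eq (Subgroup.normalizer_eq_top N).symm)
  exact .of_commute hqr (mem_centralizer_iff.1 (hle hy) z hz) (hN.orderOf_eq hz hz₁) hyr

end IsElementaryAbelian

end Actions

section SameRank

variable {G : Type u} [Group G] [Finite G] {q r : ℕ} [Fact q.Prime] [Fact r.Prime]

theorem IsMinimalNormal.isElementaryAbelian_or_exists_surjective_or_not_dvd_card {N : Subgroup G}
    (hG : IsPseudoSolvable G) (hN : IsMinimalNormal N) :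
    IsElementaryAbelian q N ∨ IsElementaryAbelian r N ∨
      (∃ f : N →* alternatingGroup (Fin 5), Function.Surjective f) ∨
      (¬ q ∣ Nat.card N ∧ ¬ r ∣ Nat.card N) := by
  rcases hN.isElementaryAbelian_or_exists_surjective_alternatingGroup hG with ⟨p, hp, hNp⟩ | hNA
  · have : Fact p.Prime := ⟨hp⟩
    by_cases hqp : q = p
    · exact .inl (hqp ▸ hNp)
    by_cases hrp : r = p
    · exact .inr (.inl (hrp ▸ hNp))
    exact .inr (.inr (.inr ⟨not_dvd_card_of_forall_pow_eq_one hqp hNp.pow_eq_one,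
      not_dvd_card_of_forall_pow_eq_one hrp hNp.pow_eq_one⟩))
  · exact .inr (.inr (.inl hNA))

theorem IsMinimalNormal.dvd_sixty_of_dvd_card {N : Subgroup G} (hN : IsMinimalNormal N)
    {f : N →* alternatingGroup (Fin 5)} (hf : Function.Surjective f) (hr : r ∣ Nat.card N) :
    r ∣ 60 :=
  nat_card_alternatingGroup_five ▸ hN.dvd_card_of_dvd_card hf hr

theorem PrimeGraphAdj.of_twoLePRank (hG : IsPseudoSolvable G) (hqr : q ≠ r)
    (hr60 : Group.IsSolvable G ∨ ¬ r ∣ 60) (hq : TwoLePRank q G) (hr : TwoLePRank r G) :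
    PrimeGraphAdj G q r := by
  refine quotient_induction (P := fun G _ _ => IsPseudoSolvable G → Group.IsSolvable G ∨ ¬ r ∣ 60 →
    TwoLePRank q G → TwoLePRank r G → PrimeGraphAdj G q r) ?_ G hG hr60 hq hr
  intro G _ _ ih hG hr60 hq hr
  have : Nontrivial G := nontrivial_of_prime_dvd_card hq.dvd_card
  obtain ⟨N, hN⟩ := exists_isMinimalNormal G
  obtain ⟨hnormal, hbot⟩ := hN.prop
  have hquotient (hqN : ¬ q ∣ Nat.card N) (hrN : ¬ r ∣ Nat.card N) : PrimeGraphAdj G q r :=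
    .of_surjective (QuotientGroup.mk'_surjective N) <|
      ih N hbot (hG.of_surjective (QuotientGroup.mk'_surjective N))
        (hr60.imp_left fun (_ : Group.IsSolvable G) => inferInstance)
        (hq.map (not_dvd_card_ker_mk' hqN)) (hr.map (not_dvd_card_ker_mk' hrN))
  rcases hN.isElementaryAbelian_or_exists_surjective_or_not_dvd_card (q := q) (r := r) hG with
    hNq | hNr | ⟨f, hf⟩ | ⟨hqN, hrN⟩
  · exact (hNq.primeGraphAdj_of_twoLePRank hbot hqr.symm hr).symm
  · exact hNr.primeGraphAdj_of_twoLePRank hbot hqr hq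
  · have hr60 := hr60.resolve_left fun _ => not_surjective_alternatingGroup_five hf
    have hrN : ¬ r ∣ Nat.card N := fun h => hr60 (hN.dvd_sixty_of_dvd_card hf h)
    by_cases hq60 : q ∣ 60
    · exact of_alternatingGroup_five_of_not_dvd_card hf hq60 hr60 hr.dvd_card hrN
    · exact hquotient (fun h => hq60 (hN.dvd_sixty_of_dvd_card hf h)) hrN
  · exact hquotient hqN hrN

theorem dvd_card_commutator_quotient {G : Type*} [Group G] [Finite G] {N : Subgroup G} [N.Normal]
    (hrN : ¬ r ∣ Nat.card N) (hr : r ∣ Nat.card (commutator G)) :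
    r ∣ Nat.card (commutator (G ⧸ N)) := by
  have hmap : (commutator G).map (QuotientGroup.mk' N) = commutator (G ⧸ N) := by
    rw [commutator_def, Subgroup.map_commutator,
      map_top_of_surjective _ (QuotientGroup.mk'_surjective N), ← commutator_def]
  exact hmap ▸ dvd_card_map (not_dvd_card_ker_mk' hrN) hr

theorem PrimeGraphAdj.of_not_twoLePRank (hG : IsPseudoSolvable G) (hqr : q ≠ r)
    (h60 : Group.IsSolvable G ∨ ¬ q ∣ 60 ∧ ¬ r ∣ 60)
    (hq : ¬ TwoLePRank q G) (hr : ¬ TwoLePRank r G)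
    (hqG : q ∣ Nat.card (commutator G)) (hrG : r ∣ Nat.card (commutator G)) :
    PrimeGraphAdj G q r := by
  refine quotient_induction (P := fun G _ _ => IsPseudoSolvable G →
    Group.IsSolvable G ∨ ¬ q ∣ 60 ∧ ¬ r ∣ 60 → ¬ TwoLePRank q G → ¬ TwoLePRank r G →
    q ∣ Nat.card (commutator G) → r ∣ Nat.card (commutator G) → PrimeGraphAdj G q r)
    ?_ G hG h60 hq hr hqG hrG
  intro G _ _ ih hG h60 hq hr hqG hrG
  have : Nontrivial G := nontrivial_of_prime_dvd_card (hqG.trans (card_subgroup_dvd_card _))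
  obtain ⟨N, hN⟩ := exists_isMinimalNormal G
  obtain ⟨hnormal, hbot⟩ := hN.prop
  have hsurj := QuotientGroup.mk'_surjective N
  have hquotient (hqN : ¬ q ∣ Nat.card N) (hrN : ¬ r ∣ Nat.card N) : PrimeGraphAdj G q r :=
    .of_surjective hsurj <| ih N hbot (hG.of_surjective hsurj)
      (h60.imp_left fun (_ : Group.IsSolvable G) => inferInstance)
      (fun h => hq (h.of_surjective hsurj (not_dvd_card_ker_mk' hqN)))
      (fun h => hr (h.of_surjective hsurj (not_dvd_card_ker_mk' hrN)))
      (dvd_card_commutator_quotient hqN hqG) (dvd_card_commutator_quotient hrN hrG)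
  rcases hN.isElementaryAbelian_or_exists_surjective_or_not_dvd_card (q := q) (r := r) hG with
    hNq | hNr | ⟨f, hf⟩ | ⟨hqN, hrN⟩
  · exact hNq.primeGraphAdj_of_not_twoLePRank hbot hqr hq hrG
  · exact (hNr.primeGraphAdj_of_not_twoLePRank hbot hqr.symm hr hqG).symm
  · obtain ⟨hq60, hr60⟩ := h60.resolve_left fun _ => not_surjective_alternatingGroup_five hf
    exact hquotient (fun h => hq60 (hN.dvd_sixty_of_dvd_card hf h))
      (fun h => hr60 (hN.dvd_sixty_of_dvd_card hf h))
  · exact hquotient hqN hrN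

end SameRank

section Coloring

/-- The prime colouring of the complement of the prime graph of a solvable group: primes of rank at
least two form one class, and the other primes dividing the order are split according to whether
they divide the order of the abelianization. -/
noncomputable def rankColoring (G : Type*) [Group G] (p : ℕ) : Fin 3 :=
  open Classical in
  if TwoLePRank p G then 0 else if p ∣ Nat.card (Abelianization G) then 2 else 1

/-- The prime colouring of the complement of the prime graph of a nonsolvable group: it modifies
`rankColoring` at the primes dividing `|A₅| = 60`. -/
noncomputable def nonsolvableColoring (G : Type*) [Group G] (p : ℕ) : Fin 3 :=
  open Classical in
  if p = 5 then 2 else if p = 3 then 1 else if p = 2 then (if TwoLePRank 2 G then 0 else 1)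
  else rankColoring G p

theorem nonsolvableColoring_of_not_dvd_sixty (G : Type*) [Group G] {p : ℕ} (hp : ¬ p ∣ 60) :
    nonsolvableColoring G p = rankColoring G p := by
  have h5 : p ≠ 5 := by rintro rfl; norm_num at hp
  have h3 : p ≠ 3 := by rintro rfl; norm_num at hp
  have h2 : p ≠ 2 := by rintro rfl; norm_num at hp
  simp only [nonsolvableColoring, h5, h3, h2, if_false]

theorem dvd_card_commutator {G : Type*} [Group G] {p : ℕ} [Fact p.Prime] (hp : p ∣ Nat.card G)
    (hpab : ¬ p ∣ Nat.card (Abelianization G)) : p ∣ Nat.card (commutator G) := by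
  rw [card_eq_card_quotient_mul_card_subgroup (commutator G)] at hp
  exact ((Fact.out : p.Prime).dvd_mul.1 hp).resolve_left hpab

variable {G : Type u} [Group G] [Finite G] {p q : ℕ} [Fact p.Prime] [Fact q.Prime]

theorem rankColoring_ne (hG : IsPseudoSolvable G) (hpq : p ≠ q) (hpG : p ∣ Nat.card G)
    (hqG : q ∣ Nat.card G) (h60 : Group.IsSolvable G ∨ ¬ p ∣ 60 ∧ ¬ q ∣ 60)
    (hadj : ¬ PrimeGraphAdj G p q) : rankColoring G p ≠ rankColoring G q := by
  intro hcolor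
  apply hadj
  unfold rankColoring at hcolor
  split_ifs at hcolor with hp hq hqab hpab hq hqab hq hqab <;> try exact absurd hcolor (by decide)
  · exact .of_twoLePRank hG hpq (h60.imp_right And.right) hp hq
  · exact .of_dvd_card_abelianization hpq hpab hqab
  · exact .of_not_twoLePRank hG hpq h60 hp hq (dvd_card_commutator hpG hpab)
      (dvd_card_commutator hqG hqab)

variable {V : Subgroup G} {f : V →* alternatingGroup (Fin 5)}

theorem nonsolvableColoring_ne_of_not_dvd_sixty [V.Normal] (hG : IsPseudoSolvable G)
    (hf : Function.Surjective f) (hp60 : p ∣ 60) (hq60 : ¬ q ∣ 60) (hqG : q ∣ Nat.card G)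
    (hadj : ¬ PrimeGraphAdj G p q) : nonsolvableColoring G p ≠ nonsolvableColoring G q := by
  have hq : TwoLePRank q G := by
    by_contra hrank
    exact hadj (.of_alternatingGroup_five_of_not_twoLePRank hf hp60 hq60 hqG hrank)
  have hp : ¬ TwoLePRank p G := fun hp =>
    hadj (.of_twoLePRank hG (by rintro rfl; exact hq60 hp60) (.inr hq60) hp hq)
  rw [nonsolvableColoring_of_not_dvd_sixty G hq60, rankColoring, if_pos hq]
  rcases eq_two_or_three_or_five_of_dvd_sixty Fact.out hp60 with rfl | rfl | rfl <;>
    simp [nonsolvableColoring, hp]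

theorem nonsolvableColoring_ne_of_dvd_sixty (hf : Function.Surjective f) (hpq : p ≠ q)
    (hp60 : p ∣ 60) (hq60 : q ∣ 60) (hadj : ¬ PrimeGraphAdj G p q) :
    nonsolvableColoring G p ≠ nonsolvableColoring G q := by
  have hrank (h : ¬ PrimeGraphAdj G 3 2) : TwoLePRank 2 G := by
    by_contra hrank
    exact h (PrimeGraphAdj.of_subgroup
      (.three_two_of_alternatingGroup_five hf fun h => hrank h.of_subgroup))
  have h5 : nonsolvableColoring G 5 = 2 := by simp [nonsolvableColoring]
  have h3 : nonsolvableColoring G 3 = 1 := by simp [nonsolvableColoring]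
  have h2 : nonsolvableColoring G 2 ≠ 2 := by
    by_cases h : TwoLePRank 2 G <;> simp [nonsolvableColoring, h]
  have h32 (h : ¬ PrimeGraphAdj G 3 2) : nonsolvableColoring G 2 = 0 := by
    simp [nonsolvableColoring, hrank h]
  rcases eq_two_or_three_or_five_of_dvd_sixty Fact.out hp60 with rfl | rfl | rfl <;>
    rcases eq_two_or_three_or_five_of_dvd_sixty Fact.out hq60 with rfl | rfl | rfl
  · exact absurd rfl hpq
  · simp [h3, h32 fun h => hadj h.symm]
  · exact h5 ▸ h2
  · simp [h3, h32 hadj]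
  · exact absurd rfl hpq
  · simp [h3, h5]
  · exact (h5 ▸ h2).symm
  · simp [h3, h5]
  · exact absurd rfl hpq

theorem nonsolvableColoring_ne (hG : IsPseudoSolvable G) (hsolv : ¬ Group.IsSolvable G)
    (hpq : p ≠ q) (hpG : p ∣ Nat.card G) (hqG : q ∣ Nat.card G) (hadj : ¬ PrimeGraphAdj G p q) :
    nonsolvableColoring G p ≠ nonsolvableColoring G q := by
  obtain ⟨V, hV, hperfect, hnontrivial⟩ := exists_normal_isPerfect_nontrivial hsolv
  obtain ⟨f, hf⟩ := hG.exists_surjective_of_isPerfect V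
  by_cases hp60 : p ∣ 60 <;> by_cases hq60 : q ∣ 60
  · exact nonsolvableColoring_ne_of_dvd_sixty hf hpq hp60 hq60 hadj
  · exact nonsolvableColoring_ne_of_not_dvd_sixty hG hf hp60 hq60 hqG hadj
  · exact (nonsolvableColoring_ne_of_not_dvd_sixty hG hf hq60 hp60 hpG fun h => hadj h.symm).symm
  · rw [nonsolvableColoring_of_not_dvd_sixty G hp60, nonsolvableColoring_of_not_dvd_sixty G hq60]
    exact rankColoring_ne hG hpq hpG hqG (.inr ⟨hp60, hq60⟩) hadj

end Coloring

/-- The complement of the prime graph of a finite pseudo-solvable group is 3-colorable. -/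
theorem complement_prime_graph_three_colorable
    (G : Type*) [Group G] [Finite G] (hG : IsPseudoSolvable G) :
    ∃ c : ℕ → Fin 3, ∀ p q : ℕ, p.Prime → q.Prime → p ≠ q →
      p ∣ Nat.card G → q ∣ Nat.card G →
      (¬ ∃ g : G, orderOf g = p * q) → c p ≠ c q := by
  by_cases hsolv : Group.IsSolvable G
  · refine ⟨rankColoring G, fun p q hp hq hpq hpG hqG hadj => ?_⟩
    have : Fact p.Prime := ⟨hp⟩
    have : Fact q.Prime := ⟨hq⟩
    exact rankColoring_ne hG hpq hpG hqG (.inl hsolv) hadj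
  · refine ⟨nonsolvableColoring G, fun p q hp hq hpq hpG hqG hadj => ?_⟩
    have : Fact p.Prime := ⟨hp⟩
    have : Fact q.Prime := ⟨hq⟩
    exact nonsolvableColoring_ne hG hsolv hpq hpG hqG hadj
end

section
/- Let G be a finite pseudo-solvable group that is not solvable, and suppose G has no element of order 6, no element of order 10, and no element of order 15 (so {2,3,5} forms a triangle in the complement of the prime graph of G). Then for every prime p dividing |G| with p ∉ {2,3,5}, G has an element of order 3p. -/
/-!
Because `G` has no element of order `6`, only one factor `A₅` can occur. Indeed, if a section of `G`
has a normal subgroup `B ≅ A₅`, it acts on the five Sylow `2`-subgroups of `B` through `A₅` and not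
`S₅`, which has elements of order `6`; so it retracts onto `B`. A retraction onto `A₅` together with
another factor of even order gives an element of order `6`. Hence `G` maps onto `A₅` with solvable
kernel, and every prime `p ∉ {2, 3, 5}` dividing `|G|` divides the order of the kernel.

A Frattini argument provides a subgroup which still maps onto `A₅` and normalizes a non-trivial
abelian `p`-group `V`. There an element `c` of order `3` normalizes a Sylow `2`-subgroup `P`.
Without elements of order `6` and `3p`, it acts fixed-point-freely on `P` and on `V`, and averaging
over the Frobenius group `P ⋊ ⟨c⟩` shows that `P` centralizes `V`. By simplicity of `A₅` the
centralizer of `V` maps onto `A₅`, hence contains an element of order `3`, a contradiction.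
-/

open Function Subgroup

section ElementOrders

variable {G H : Type*} [Group G] [Group H] [Finite G] {p q n : ℕ}

theorem exists_orderOf_eq_of_dvd_orderOf {x : G} (h : n ∣ orderOf x) : ∃ g : G, orderOf g = n :=
  ⟨_, orderOf_pow_orderOf_div (orderOf_pos x).ne' h⟩

theorem exists_orderOf_eq_of_dvd_orderOf_map (f : G →* H) {x : G} (h : n ∣ orderOf (f x)) :
    ∃ g : G, orderOf g = n :=
  exists_orderOf_eq_of_dvd_orderOf (h.trans (orderOf_map_dvd f x))

theorem exists_orderOf_eq_mul_of_commute {x y : G} (hxy : Commute x y)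
    (hpq : (orderOf x).Coprime q) (hy : q ∣ orderOf y) : ∃ g : G, orderOf g = orderOf x * q := by
  obtain ⟨k, hk⟩ : ∃ k : ℕ, orderOf (y ^ k) = q :=
    ⟨_, orderOf_pow_orderOf_div (orderOf_pos y).ne' hy⟩
  refine ⟨x * y ^ k, ?_⟩
  rw [(hxy.pow_right k).orderOf_mul_eq_mul_orderOf_of_coprime (by rwa [hk]), hk]

theorem eq_one_of_commute_of_isPGroup [Fact p.Prime] {P : Subgroup G} (hP : IsPGroup p P) {x y : G}
    (hy : y ∈ P) (hxy : Commute x y) (hxp : (orderOf x).Coprime p)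
    (h : ¬ ∃ g : G, orderOf g = orderOf x * p) : y = 1 := by
  by_contra hy1
  have hpy : p ∣ orderOf y := by
    simpa using hP.dvd_orderOf (g := ⟨y, hy⟩) (by simpa using hy1)
  exact h (exists_orderOf_eq_mul_of_commute hxy hxp hpy)

end ElementOrders

section FrobeniusAveraging

variable {G V : Type*} [Group G] [CommGroup V] {S C : Subgroup G} {x t : G}

theorem prod_conj_eq_prod_mul_right [Fintype S] (hx : x ∈ normalizer (S : Set G))
    (hfree : ∀ s ∈ S, Commute x s → s = 1) (F : G → V) :
    ∏ s : S, F (s * x * (s : G)⁻¹) = ∏ s : S, F (s * x) := by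
  let c : S → S := fun s ↦
    s * ⟨x * (s : G)⁻¹ * x⁻¹, (mem_normalizer_iff.mp hx _).mp (S.inv_mem s.2)⟩
  have hc (s : S) : (c s : G) * x = s * x * (s : G)⁻¹ := by simp [c, mul_assoc]
  have hinj : Injective c := by
    intro s t hst
    have hst' : (s : G) * x * (s : G)⁻¹ = t * x * (t : G)⁻¹ := by rw [← hc, ← hc, hst]
    have hcomm : Commute x ((t⁻¹ * s : S) : G) := by
      have := congrArg (fun g ↦ (t : G)⁻¹ * g * s) hst'
      simpa [Commute, SemiconjBy, mul_assoc] using this.symm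
    exact (inv_mul_eq_one.mp (Subtype.ext (hfree _ (t⁻¹ * s).2 hcomm))).symm
  exact Fintype.prod_bijective c (Finite.injective_iff_bijective.mp hinj) _ _ fun s ↦ by rw [hc]

variable (φ : G →* MulAut V)

theorem map_prod_mulAut_mul_eq_self [Fintype S] (ht : t ∈ S) (v : V) :
    φ t (∏ s : S, φ (s * x) v) = ∏ s : S, φ (s * x) v := by
  rw [map_prod]
  refine Fintype.prod_equiv (Equiv.mulLeft ⟨t, ht⟩) _ _ fun s ↦ ?_
  rw [← MulAut.mul_apply, ← map_mul]
  simp [mul_assoc]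

-- Multiply the norm relations of the conjugates of `C` under `S`. Each of them contributes one
-- factor `v`, while the conjugates of any `x ≠ 1` in `C` fill the coset `S * x` and contribute
-- an `S`-invariant factor.
theorem map_pow_card_eq_self_of_frobenius [Finite S] [Finite C] (hCS : C ≤ normalizer (S : Set G))
    (hfree : ∀ x ∈ C, x ≠ 1 → ∀ s ∈ S, Commute x s → s = 1)
    (hfix : ∀ v, (∀ x ∈ C, φ x v = v) → v = 1) (ht : t ∈ S) (v : V) :
    φ t (v ^ Nat.card S) = v ^ Nat.card S := by
  classical
  have := Fintype.ofFinite S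
  have := Fintype.ofFinite C
  have hnorm (w : V) : ∏ x : C, φ x w = 1 :=
    hfix _ fun c hc ↦ by simpa using map_prod_mulAut_mul_eq_self (x := 1) φ hc w
  have hconj (s : S) : ∏ x : C, φ (s * x * (s : G)⁻¹) v = 1 := by
    simpa [← map_prod] using congrArg (φ s) (hnorm (φ (s : G)⁻¹ v))
  let W : V := ∏ x ∈ Finset.univ.erase (1 : C), ∏ s : S, φ (s * x) v
  have hW : φ t W = W := by
    rw [map_prod (φ t)]
    exact Finset.prod_congr rfl fun x _ ↦ map_prod_mulAut_mul_eq_self φ ht v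
  have hprod : v ^ Nat.card S * W = 1 := calc
    v ^ Nat.card S * W = ∏ x : C, ∏ s : S, φ (s * x * (s : G)⁻¹) v := by
      rw [← Finset.mul_prod_erase _ _ (Finset.mem_univ 1)]
      congr 1
      · simp [Nat.card_eq_fintype_card]
      · refine Finset.prod_congr rfl fun x hx ↦ ?_
        have hx1 : (x : G) ≠ 1 := by simpa using hx
        exact (prod_conj_eq_prod_mul_right (hCS x.2) (hfree x x.2 hx1) fun g ↦ φ g v).symm
    _ = 1 := by rw [Finset.prod_comm]; exact Finset.prod_eq_one fun s _ ↦ hconj s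
  rw [eq_inv_of_mul_eq_one_left hprod, map_inv, hW]

end FrobeniusAveraging

section CoprimeAction

variable {G : Type*} [Group G] [Finite G] {p q r : ℕ}
  [Fact p.Prime] [Fact q.Prime] [Fact r.Prime]

open scoped IsMulCommutative in
theorem le_centralizer_of_mem_normalizer {P V : Subgroup G} [V.Normal] [IsMulCommutative V]
    (hP : IsPGroup r P) (hV : IsPGroup p V) (hrp : r ≠ p) (hqr : q.Coprime r) (hqp : q.Coprime p)
    {c : G} (hcP : c ∈ normalizer (P : Set G)) (hcq : orderOf c = q)
    (h_qr : ¬ ∃ g : G, orderOf g = q * r) (h_qp : ¬ ∃ g : G, orderOf g = q * p) :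
    P ≤ centralizer V := by
  let φ : G →* MulAut V := MulAut.conjNormal
  have commute_of_fixed {x : G} {v : V} (hxv : φ x v = v) : Commute x v :=
    eq_mul_of_mul_inv_eq (congrArg Subtype.val hxv)
  have hfree : ∀ x ∈ zpowers c, x ≠ 1 → ∀ s ∈ P, Commute x s → s = 1 := by
    intro x hx hx1 s hs hxs
    have hxq : orderOf x = q :=
      ((Nat.dvd_prime Fact.out).mp (hcq ▸ orderOf_dvd_of_mem_zpowers hx)).resolve_left
        (orderOf_eq_one_iff.not.mpr hx1)
    exact eq_one_of_commute_of_isPGroup hP hs hxs (by rwa [hxq]) (by rwa [hxq])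
  have hfix (v : V) (hv : ∀ x ∈ zpowers c, φ x v = v) : v = 1 :=
    Subtype.ext <| eq_one_of_commute_of_isPGroup hV v.2 (commute_of_fixed (hv c (mem_zpowers c)))
      (by rwa [hcq]) (by rwa [hcq])
  intro t ht v hv
  have hcop : (Nat.card P).Coprime (orderOf (⟨v, hv⟩ : V)) :=
    (IsPGroup.coprime_card_of_ne r p hrp P V hP hV).coprime_dvd_right (orderOf_dvd_natCard _)
  obtain ⟨n, hn⟩ := exists_pow_eq_self_of_coprime hcop
  have htv : φ t ⟨v, hv⟩ = ⟨v, hv⟩ := by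
    rw [← hn, map_pow,
      map_pow_card_eq_self_of_frobenius φ (zpowers_le_of_mem hcP) hfree hfix ht]
  exact (commute_of_fixed htv).eq.symm

end CoprimeAction

section SylowNormalizer

variable {G Q : Type*} [Group G] [Finite G] [Group Q] {f : G →* Q} {q r : ℕ} [Fact r.Prime]

theorem map_normalizer_sylow (hf : Surjective f) (P : Sylow r G) :
    (normalizer (P : Set G)).map f = normalizer ((P.map f : Subgroup Q) : Set Q) := by
  refine le_antisymm (le_normalizer_map f) fun y hy ↦ ?_
  obtain ⟨g, rfl⟩ := hf y
  let K : Subgroup G := ((P : Subgroup G).map f).comap f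
  have hPK : P ≤ K := le_comap_map f P
  have hgPK : (g • P : Sylow r G) ≤ K := by
    rintro _ ⟨x, hx, rfl⟩
    have := (mem_normalizer_iff.mp hy _).mp (mem_map_of_mem f hx)
    simpa [K] using this
  obtain ⟨k, hk⟩ := MulAction.exists_smul_eq K ((g • P).subtype hgPK) (P.subtype hPK)
  obtain ⟨u, hu, hfu⟩ := k.2
  have hkg : (k : G) * g ∈ normalizer (P : Set G) := by
    rw [← Sylow.smul_eq_iff_mem_normalizer, mul_smul]
    exact Sylow.subtype_injective ((Sylow.smul_subtype ..).symm.trans hk)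
  refine ⟨u⁻¹ * (k * g), mul_mem (inv_mem (le_normalizer hu)) hkg, ?_⟩
  simp [hfu]

theorem exists_mem_normalizer_sylow_orderOf_eq [Fact q.Prime] (hf : Surjective f) (P : Sylow r G)
    (hq : q ∣ Nat.card (normalizer (((P : Subgroup G).map f : Subgroup Q) : Set Q))) :
    ∃ c ∈ normalizer (P : Set G), orderOf c = q := by
  rw [← map_normalizer_sylow hf P] at hq
  obtain ⟨c, hc⟩ := exists_prime_orderOf_dvd_card' q (hq.trans (card_map_dvd _ f))
  exact ⟨c, c.2, by rwa [orderOf_coe]⟩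

end SylowNormalizer

section NormalSubgroup

variable {G Q : Type*} [Group G] [Group Q] [IsSimpleGroup Q] {f : G →* Q}

theorem map_eq_top_of_le_of_map_ne_bot (hf : Surjective f) {N P : Subgroup G} [hN : N.Normal]
    (hPN : P ≤ N) (hP : P.map f ≠ ⊥) : N.map f = ⊤ :=
  (hN.map f hf).eq_bot_or_eq_top.resolve_left fun h ↦ hP (le_bot_iff.mp (h ▸ map_mono hPN))

variable [Finite G] {p q r : ℕ} [Fact p.Prime] [Fact q.Prime] [Fact r.Prime]

theorem exists_orderOf_eq_mul_of_normal (hf : Surjective f) (S : Sylow r Q) (hrQ : r ∣ Nat.card Q)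
    (hqS : q ∣ Nat.card (normalizer (S : Set Q))) (hqr : q.Coprime r) (hqp : q.Coprime p)
    (hrp : r ≠ p) (h_qr : ¬ ∃ g : G, orderOf g = q * r) {V : Subgroup G} [V.Normal]
    [IsMulCommutative V] (hV : IsPGroup p V) (hV_ne : V ≠ ⊥) :
    ∃ g : G, orderOf g = q * p := by
  by_contra h_qp
  have := Finite.of_surjective f hf
  obtain ⟨P, rfl⟩ := Sylow.mapSurjective_surjective hf r S
  obtain ⟨c, hcP, hcq⟩ := exists_mem_normalizer_sylow_orderOf_eq hf P hqS
  have hPV : (P : Subgroup G) ≤ centralizer V :=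
    le_centralizer_of_mem_normalizer P.isPGroup' hV hrp hqr hqp hcP hcq h_qr h_qp
  have htop : (centralizer (V : Set G)).map f = ⊤ :=
    map_eq_top_of_le_of_map_ne_bot hf hPV (Sylow.ne_bot_of_dvd_card (P.mapSurjective hf) hrQ)
  have hqV : q ∣ Nat.card (centralizer (V : Set G)) := calc
    q ∣ Nat.card Q := hqS.trans (card_subgroup_dvd_card _)
    _ = Nat.card ((centralizer (V : Set G)).map f) := by rw [htop, card_top]
    _ ∣ Nat.card (centralizer (V : Set G)) := card_map_dvd _ f
  obtain ⟨x, hx⟩ := exists_prime_orderOf_dvd_card' q hqV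
  rw [← orderOf_coe] at hx
  obtain ⟨v, hv, hv1⟩ := V.bot_or_exists_ne_one.resolve_left hV_ne
  exact hv1 (eq_one_of_commute_of_isPGroup hV hv (mem_centralizer_iff.mp x.2 v hv).symm
    (by rwa [hx]) (by rwa [hx]))

end NormalSubgroup

section FrattiniReduction

variable {G Q : Type*} [Group G] [Group Q] {f : G →* Q}

theorem surjective_comp_subtype_of_sup_ker_eq_top (hf : Surjective f) {K : Subgroup G}
    (hK : K ⊔ f.ker = ⊤) : Surjective (f.comp K.subtype) := by
  rw [← MonoidHom.range_eq_top, MonoidHom.range_comp, range_subtype]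
  calc K.map f = (K ⊔ f.ker).map f := by
        rw [Subgroup.map_sup, (map_eq_bot_iff f.ker).mpr le_rfl, sup_bot_eq]
    _ = ⊤ := by rw [hK, ← MonoidHom.range_eq_map, MonoidHom.range_eq_top.mpr hf]

theorem exists_normal_isMulCommutative_of_isPGroup [Finite G] {p : ℕ} [Fact p.Prime]
    {P : Subgroup G} (hP : IsPGroup p P) (hP_ne : P ≠ ⊥) :
    ∃ V : Subgroup (normalizer (P : Set G)),
      V.Normal ∧ IsMulCommutative V ∧ IsPGroup p V ∧ V ≠ ⊥ := by
  let N : Subgroup (normalizer (P : Set G)) := P.subgroupOf _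
  have hN : IsPGroup p N := hP.of_equiv (subgroupOfEquivOfLe le_normalizer).symm
  have : Nontrivial P := (nontrivial_iff_ne_bot P).mpr hP_ne
  have : Nontrivial N := (subgroupOfEquivOfLe (le_normalizer (H := P))).toEquiv.nontrivial
  have := hN.center_nontrivial
  refine ⟨(center N).map N.subtype, inferInstance, inferInstance, (hN.to_subgroup _).map _, ?_⟩
  rw [Ne, map_eq_bot_iff_of_injective _ N.subtype_injective]
  exact (nontrivial_iff_ne_bot _).mp this

end FrattiniReduction

theorem exists_orderOf_eq_mul_of_dvd_card_ker {G Q : Type*} [Group G] [Finite G] [Group Q]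
    [IsSimpleGroup Q] {p q r : ℕ} [Fact p.Prime] [Fact q.Prime] [Fact r.Prime] {f : G →* Q}
    (hf : Surjective f) (hp : p ∣ Nat.card f.ker) (S : Sylow r Q) (hrQ : r ∣ Nat.card Q)
    (hqS : q ∣ Nat.card (normalizer (S : Set Q))) (hqr : q.Coprime r) (hqp : q.Coprime p)
    (hrp : r ≠ p) (h_qr : ¬ ∃ g : G, orderOf g = q * r) : ∃ g : G, orderOf g = q * p := by
  let P : Sylow p f.ker := default
  have hP_ne : (P : Subgroup f.ker).map f.ker.subtype ≠ ⊥ := by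
    rw [Ne, map_eq_bot_iff_of_injective _ f.ker.subtype_injective]
    exact P.ne_bot_of_dvd_card hp
  obtain ⟨V, _, _, hV, hV_ne⟩ := exists_normal_isMulCommutative_of_isPGroup (P.2.map _) hP_ne
  obtain ⟨g, hg⟩ := exists_orderOf_eq_mul_of_normal
    (surjective_comp_subtype_of_sup_ker_eq_top hf P.normalizer_sup_eq_top) S hrQ hqS hqr hqp hrp
    (fun ⟨g, hg⟩ ↦ h_qr ⟨g, by rwa [orderOf_coe]⟩) hV hV_ne
  exact ⟨g, by rwa [orderOf_coe]⟩

section SimpleGroups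

theorem card_sylow_two_of_card_eq_sixty {Q : Type*} [Group Q] (hQ : Nat.card Q = 60)
    (P : Sylow 2 Q) : Nat.card P = 4 := by
  have : Finite Q := Nat.finite_of_card_ne_zero (by omega)
  rw [P.card_eq_multiplicity, hQ, Nat.factorization_eq_card_pow_dvd _ Nat.prime_two]
  rfl

theorem sylow_two_ne_bot_and_ne_top {Q : Type*} [Group Q] (hQ : Nat.card Q = 60)
    (P : Sylow 2 Q) : (P : Subgroup Q) ≠ ⊥ ∧ (P : Subgroup Q) ≠ ⊤ := by
  have hP := card_sylow_two_of_card_eq_sixty hQ P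
  constructor <;> intro h
  · rw [h, card_bot] at hP
    omega
  · rw [h, card_top] at hP
    omega

variable {Q : Type*} [Group Q] [IsSimpleGroup Q] {p : ℕ}

theorem toPermHom_sylow_injective (P : Sylow p Q) (h_bot : (P : Subgroup Q) ≠ ⊥)
    (h_top : (P : Subgroup Q) ≠ ⊤) : Injective (MulAction.toPermHom Q (Sylow p Q)) := by
  rw [← MonoidHom.ker_eq_bot_iff]
  refine (MonoidHom.normal_ker _).eq_bot_or_eq_top.resolve_right fun hker ↦ ?_
  have hnormal : (P : Subgroup Q).Normal := by
    rw [← normalizer_eq_top_iff, eq_top_iff]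
    intro g _
    have hg : g ∈ (MulAction.toPermHom Q (Sylow p Q)).ker := hker ▸ mem_top g
    exact Sylow.smul_eq_iff_mem_normalizer.mp (DFunLike.congr_fun (MonoidHom.mem_ker.mp hg) P)
  exact hnormal.eq_bot_or_eq_top.elim h_bot h_top

theorem sylow_eq_bot_or_eq_top_of_normalizer_le_centralizer [Finite Q] [Fact p.Prime]
    (P : Sylow p Q) (hP : normalizer (P : Set Q) ≤ centralizer (P : Set Q)) :
    (P : Subgroup Q) = ⊥ ∨ (P : Subgroup Q) = ⊤ := by
  have h := MonoidHom.ker_transferSylow_isComplement' P hP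
  rcases (MonoidHom.normal_ker (MonoidHom.transferSylow P hP)).eq_bot_or_eq_top with hk | hk
  · exact .inr (isComplement'_bot_left.mp (hk ▸ h))
  · exact .inl (isComplement'_top_left.mp (hk ▸ h))

theorem not_isSolvable_of_not_prime_card [Finite Q] (hQ : ¬ (Nat.card Q).Prime) :
    ¬ Group.IsSolvable Q := by
  intro h
  let _ : CommGroup Q := { mul_comm := IsSimpleGroup.comm_iff_isSolvable.mpr h }
  exact hQ IsSimpleGroup.prime_card

theorem toPermHom_sylow_two_injective (hQ : Nat.card Q = 60) :
    Injective (MulAction.toPermHom Q (Sylow 2 Q)) :=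
  have h := sylow_two_ne_bot_and_ne_top hQ default
  toPermHom_sylow_injective default h.1 h.2

theorem card_sylow_two_ne_fifteen (hQ : Nat.card Q = 60) : Nat.card (Sylow 2 Q) ≠ 15 := by
  intro hn
  have : Finite Q := Nat.finite_of_card_ne_zero (by omega)
  let P : Sylow 2 Q := default
  have hP := card_sylow_two_of_card_eq_sixty hQ P
  have hN : (P : Subgroup Q) = normalizer (P : Set Q) := by
    refine eq_of_le_of_card_ge le_normalizer ?_
    have := (normalizer (P : Set Q)).card_mul_index
    rw [← P.card_eq_index_normalizer, hn] at this
    omega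
  have : IsMulCommutative P := IsPGroup.isMulCommutative_of_card_eq_prime_sq (p := 2) hP
  exact (sylow_eq_bot_or_eq_top_of_normalizer_le_centralizer P (hN ▸ le_centralizer _)).elim
    (sylow_two_ne_bot_and_ne_top hQ P).1 (sylow_two_ne_bot_and_ne_top hQ P).2

theorem card_sylow_two_eq_five (hQ : Nat.card Q = 60) : Nat.card (Sylow 2 Q) = 5 := by
  have : Finite Q := Nat.finite_of_card_ne_zero (by omega)
  let P : Sylow 2 Q := default
  have hindex : (P : Subgroup Q).index = 15 := by
    have := (P : Subgroup Q).card_mul_index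
    rw [card_sylow_two_of_card_eq_sixty hQ] at this
    omega
  have hdvd : Nat.card (Sylow 2 Q) ∈ Nat.divisors 15 :=
    Nat.mem_divisors.mpr ⟨hindex ▸ P.card_dvd_index, by norm_num⟩
  have hle : 60 ≤ (Nat.card (Sylow 2 Q)).factorial := by
    rw [← hQ, ← Nat.card_perm]
    exact Nat.card_le_card_of_injective _ (toPermHom_sylow_two_injective hQ)
  have h15 := card_sylow_two_ne_fifteen hQ
  generalize Nat.card (Sylow 2 Q) = n at *
  have : n = 1 ∨ n = 3 ∨ n = 5 ∨ n = 15 := by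
    rw [show Nat.divisors 15 = {1, 3, 5, 15} by rfl] at hdvd
    simpa using hdvd
  rcases this with rfl | rfl | rfl | rfl <;> simp [Nat.factorial] at *

theorem card_normalizer_sylow_two (hQ : Nat.card Q = 60) (P : Sylow 2 Q) :
    Nat.card (normalizer (P : Set Q)) = 12 := by
  have : Finite Q := Nat.finite_of_card_ne_zero (by omega)
  have := (normalizer (P : Set Q)).card_mul_index
  rw [← P.card_eq_index_normalizer, card_sylow_two_eq_five hQ] at this
  omega

end SimpleGroups

section Retraction

theorem exists_perm_orderOf_eq_six {α : Type*} [Finite α] (hα : 5 ≤ Nat.card α) :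
    ∃ σ : Equiv.Perm α, orderOf σ = 6 := by
  classical
  have := Fintype.ofFinite α
  obtain ⟨σ, hσ⟩ := (Equiv.Perm.exists_with_cycleType_iff (m := {2, 3}) (α := α)).mpr
    ⟨by simpa [← Nat.card_eq_fintype_card] using hα, by simp⟩
  exact ⟨σ, by rw [← Equiv.Perm.lcm_cycleType, hσ]; rfl⟩

theorem eq_or_eq_top_of_le_of_prime_index {G : Type*} [Group G] {H K : Subgroup G} (hHK : H ≤ K)
    (hH : H.index.Prime) : K = H ∨ K = ⊤ := by
  rw [← relIndex_mul_index hHK, Nat.prime_mul_iff] at hH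
  rcases hH with ⟨-, h⟩ | ⟨-, h⟩
  · exact .inr (index_eq_one.mp h)
  · exact .inl (le_antisymm (relIndex_eq_one.mp h) hHK)

theorem exists_retraction_of_card_eq_sixty {X : Type*} [Group X] [Finite X] {A : Subgroup X}
    [A.Normal] [IsSimpleGroup A] (hA : Nat.card A = 60) (h6 : ¬ ∃ x : X, orderOf x = 6) :
    ∃ ρ : X →* A, ∀ a : A, ρ a = a := by
  let j : A →* Equiv.Perm (Sylow 2 A) := MulAction.toPermHom A (Sylow 2 A)
  let ψ : X →* Equiv.Perm (Sylow 2 A) :=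
    (MulAction.toPermHom (MulAut A) (Sylow 2 A)).comp MulAut.conjNormal
  have hψ (a : A) : ψ a = j a := by
    ext1 P
    simp [ψ, j, MulAut.conjNormal_val, Sylow.smul_def]
  have hj : Injective j := toPermHom_sylow_two_injective hA
  have hindex : j.range.index = 2 := by
    have := j.range.card_mul_index
    rw [← Nat.card_congr (MonoidHom.ofInjective hj).toEquiv, hA, Nat.card_perm,
      card_sylow_two_eq_five hA, show Nat.factorial 5 = 120 from rfl] at this
    omega
  have hle : j.range ≤ ψ.range := by
    rintro _ ⟨a, rfl⟩
    exact ⟨a, hψ a⟩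
  have hne_top : ψ.range ≠ ⊤ := by
    intro htop
    obtain ⟨σ, hσ⟩ := exists_perm_orderOf_eq_six (card_sylow_two_eq_five hA).ge
    obtain ⟨x, rfl⟩ := MonoidHom.range_eq_top.mp htop σ
    exact h6 (exists_orderOf_eq_of_dvd_orderOf_map ψ hσ.symm.dvd)
  have hrange : ψ.range = j.range :=
    (eq_or_eq_top_of_le_of_prime_index hle (by rw [hindex]; exact Nat.prime_two)).resolve_right
      hne_top
  refine ⟨(MonoidHom.ofInjective hj).symm.toMonoidHom.comp
    (ψ.codRestrict j.range fun x ↦ hrange ▸ ⟨x, rfl⟩), fun a ↦ ?_⟩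
  exact (MonoidHom.ofInjective hj).symm_apply_eq.mpr (Subtype.ext (hψ a))

end Retraction

section SolvableKernel

/-- `X` is *solvable-by-`Q`*: an extension of `Q` by a solvable normal subgroup, which is encoded
as the kernel of a surjection onto `Q`. -/
def IsSolvableBy (Q X : Type*) [Group Q] [Group X] : Prop :=
  ∃ f : X →* Q, Surjective f ∧ Group.IsSolvable f.ker

variable {X Q : Type*} [Group X] [Group Q]

theorem isSolvable_of_mulEquiv {Y : Type*} [Group Y] (e : X ≃* Y) (hX : Group.IsSolvable X) :
    Group.IsSolvable Y :=
  @Group.isSolvable_of_surjective _ _ _ _ e.toMonoidHom e.surjective hX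

theorem IsSolvableBy.of_mulEquiv {Y : Type*} [Group Y] (e : X ≃* Y) (h : IsSolvableBy Q X) :
    IsSolvableBy Q Y := by
  obtain ⟨f, hf, hs⟩ := h
  refine ⟨f.comp e.symm.toMonoidHom, hf.comp e.symm.surjective, ?_⟩
  rw [← MonoidHom.comap_ker]
  exact Group.isSolvable_of_isSolvable_injective (f := e.symm.toMonoidHom.subgroupComap f.ker)
    fun a b hab ↦ Subtype.ext (e.symm.injective (congrArg Subtype.val hab))

theorem IsSolvableBy.of_quotient {A : Subgroup X} [A.Normal] (hA : Group.IsSolvable A)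
    (e : X ⧸ A ≃* Q) : IsSolvableBy Q X := by
  refine ⟨e.toMonoidHom.comp (QuotientGroup.mk' A),
    e.surjective.comp (QuotientGroup.mk'_surjective A), ?_⟩
  rwa [MulEquiv.toMonoidHom_eq_coe, MonoidHom.ker_mulEquiv_comp, QuotientGroup.ker_mk']

theorem isSolvable_ker_of_comp_subtype_ker {A : Subgroup X} [A.Normal]
    [Group.IsSolvable (X ⧸ A)] {g : X →* Q}
    (h : Group.IsSolvable (g.comp A.subtype).ker) : Group.IsSolvable g.ker := by
  let i : (g.comp A.subtype).ker →* g.ker :=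
    (A.subtype.comp (g.comp A.subtype).ker.subtype).codRestrict g.ker fun a ↦ a.2
  refine Group.isSolvable_of_ker_le_range i ((QuotientGroup.mk' A).comp g.ker.subtype) ?_
  intro x hx
  exact ⟨⟨⟨x, (QuotientGroup.eq_one_iff _).mp hx⟩, x.2⟩, rfl⟩

theorem le_ker_of_isSolvable [IsSimpleGroup Q] (hQ : ¬ Group.IsSolvable Q) {f : X →* Q}
    (hf : Surjective f) {N : Subgroup X} [hN : N.Normal] [Group.IsSolvable N] : N ≤ f.ker := by
  refine (map_eq_bot_iff N).mp ((hN.map f hf).eq_bot_or_eq_top.resolve_right fun htop ↦ hQ ?_)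
  refine Group.isSolvable_of_surjective (f := f.comp N.subtype) ?_
  rwa [← MonoidHom.range_eq_top, MonoidHom.range_comp, range_subtype]

theorem characteristic_ker_of_isSolvable [IsSimpleGroup Q] (hQ : ¬ Group.IsSolvable Q) {f : X →* Q}
    (hf : Surjective f) (hs : Group.IsSolvable f.ker) : f.ker.Characteristic := by
  refine characteristic_iff_map_le.mpr fun α ↦ ?_
  have : (f.ker.map α.toMonoidHom).Normal := (MonoidHom.normal_ker f).map _ α.surjective
  have : Group.IsSolvable (f.ker.map α.toMonoidHom) :=
    Group.isSolvable_of_surjective (α.toMonoidHom.subgroupMap_surjective f.ker)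
  exact le_ker_of_isSolvable hQ hf

theorem exists_mulEquiv_of_ker_eq {Y : Type*} [Group Y] {f : X →* Q} {f' : X →* Y}
    (hf : Surjective f) (hf' : Surjective f') (h : f.ker = f'.ker) :
    ∃ e : Y ≃* Q, ∀ x, e (f' x) = f x := by
  refine ⟨(QuotientGroup.liftEquiv f.ker hf' h).symm.trans (QuotientGroup.liftEquiv f.ker hf rfl),
    fun x ↦ ?_⟩
  rw [MulEquiv.trans_apply, ← QuotientGroup.liftEquiv_coe f.ker hf' h x, MulEquiv.symm_apply_apply,
    QuotientGroup.liftEquiv_coe]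

theorem exists_extension_of_isSolvable_ker [Finite X] [IsSimpleGroup Q] (hQ : Nat.card Q = 60)
    (h6 : ¬ ∃ x : X, orderOf x = 6) {A : Subgroup X} [hA : A.Normal] {f : A →* Q}
    (hf : Surjective f) (hs : Group.IsSolvable f.ker) : ∃ g : X →* Q, g.comp A.subtype = f := by
  have : Finite Q := Nat.finite_of_card_ne_zero (by omega)
  have := characteristic_ker_of_isSolvable
    (not_isSolvable_of_not_prime_card (by rw [hQ]; norm_num)) hf hs
  let π : X →* X ⧸ f.ker.map A.subtype := QuotientGroup.mk' _
  have hπ : Surjective π := QuotientGroup.mk'_surjective _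
  have hker : f.ker = (π.subgroupMap A).ker := by
    rw [ker_subgroupMap, QuotientGroup.ker_mk', subgroupOf,
      comap_map_eq_self_of_injective A.subtype_injective]
  obtain ⟨e, he⟩ := exists_mulEquiv_of_ker_eq hf (π.subgroupMap_surjective A) hker
  have : (A.map π).Normal := hA.map π hπ
  have : IsSimpleGroup (A.map π) := e.isSimpleGroup
  have h6' : ¬ ∃ y : X ⧸ f.ker.map A.subtype, orderOf y = 6 := by
    rintro ⟨y, hy⟩
    obtain ⟨x, rfl⟩ := hπ y
    exact h6 (exists_orderOf_eq_of_dvd_orderOf_map π hy.symm.dvd)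
  obtain ⟨ρ, hρ⟩ :=
    exists_retraction_of_card_eq_sixty ((Nat.card_congr e.toEquiv).trans hQ) h6'
  refine ⟨e.toMonoidHom.comp (ρ.comp π), MonoidHom.ext fun a ↦ ?_⟩
  exact (congrArg e (hρ (π.subgroupMap A a))).trans (he a)

theorem IsSolvableBy.of_subgroup [Finite X] [IsSimpleGroup Q] (hQ : Nat.card Q = 60)
    (h6 : ¬ ∃ x : X, orderOf x = 6) {A : Subgroup X} [A.Normal] [Group.IsSolvable (X ⧸ A)]
    (hA : IsSolvableBy Q A) : IsSolvableBy Q X := by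
  obtain ⟨f, hf, hs⟩ := hA
  obtain ⟨g, rfl⟩ := exists_extension_of_isSolvable_ker hQ h6 hf hs
  exact ⟨g, Surjective.of_comp hf, isSolvable_ker_of_comp_subtype_ker hs⟩

theorem IsSolvableBy.exists_orderOf_eq_six [Finite X] [IsSimpleGroup Q] (hQ : Nat.card Q = 60)
    {A : Subgroup X} [A.Normal] (hXA : 2 ∣ Nat.card (X ⧸ A)) (hA : IsSolvableBy Q A) :
    ∃ x : X, orderOf x = 6 := by
  by_contra h6
  obtain ⟨f, hf, hs⟩ := hA
  obtain ⟨g, rfl⟩ := exists_extension_of_isSolvable_ker hQ h6 hf hs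
  have : Finite Q := Nat.finite_of_card_ne_zero (by omega)
  obtain ⟨y, hy⟩ := exists_prime_orderOf_dvd_card' 2 hXA
  obtain ⟨z, hz⟩ := exists_prime_orderOf_dvd_card' (G := Q) 3 (by rw [hQ]; norm_num)
  obtain ⟨x, rfl⟩ := QuotientGroup.mk'_surjective A y
  obtain ⟨a, ha⟩ := hf ((g x)⁻¹ * z)
  have hgz : g (x * a) = z := by
    rw [map_mul, ← mul_inv_eq_one]
    simpa [mul_assoc] using congrArg (g x * · * z⁻¹) ha
  have hmk : QuotientGroup.mk' A (x * a) = QuotientGroup.mk' A x := by simp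
  have h2 : 2 ∣ orderOf (x * a) := hy ▸ hmk ▸ orderOf_map_dvd _ _
  have h3 : 3 ∣ orderOf (x * a) := hz ▸ hgz ▸ orderOf_map_dvd _ _
  exact h6 (exists_orderOf_eq_of_dvd_orderOf
    (Nat.Coprime.mul_dvd_of_dvd_of_dvd (by norm_num) h2 h3))

theorem isSolvable_or_isSolvableBy_of_normal [Finite X] [IsSimpleGroup Q] (hQ : Nat.card Q = 60)
    (h6 : ¬ ∃ x : X, orderOf x = 6) {A : Subgroup X} [A.Normal]
    (hA : Group.IsSolvable A ∨ IsSolvableBy Q A)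
    (hXA : IsCyclic (X ⧸ A) ∨ Nonempty (X ⧸ A ≃* Q)) :
    Group.IsSolvable X ∨ IsSolvableBy Q X := by
  rcases hXA with hcyc | ⟨⟨e⟩⟩
  · have : Group.IsSolvable (X ⧸ A) := by
      let _ := hcyc.commGroup
      infer_instance
    refine hA.imp ?_ (.of_subgroup hQ h6)
    intro _
    exact Group.isSolvable_of_ker_le_range A.subtype (QuotientGroup.mk' A) (by simp)
  · refine .inr (.of_quotient (hA.resolve_right fun h ↦ h6 (h.exists_orderOf_eq_six hQ ?_)) e)
    rw [Nat.card_congr e.toEquiv, hQ]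
    norm_num

end SolvableKernel

section PseudoSolvable

theorem card_alternatingGroup_five : Nat.card (alternatingGroup (Fin 5)) = 60 := by
  rw [nat_card_alternatingGroup]
  simp [Nat.factorial]

theorem IsPseudoSolvable.isSolvable_or_isSolvableBy {G : Type*} [Group G] [Finite G]
    (hG : IsPseudoSolvable G) (h6 : ¬ ∃ g : G, orderOf g = 6) :
    Group.IsSolvable G ∨ IsSolvableBy (alternatingGroup (Fin 5)) G := by
  obtain ⟨n, H, h_zero, h_last, hH⟩ := hG
  have hH_or (i : Fin (n + 1)) :
      Group.IsSolvable (H i) ∨ IsSolvableBy (alternatingGroup (Fin 5)) (H i) := by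
    induction i using Fin.induction with
    | zero => exact .inl (h_zero ▸ inferInstance)
    | succ i ih =>
      obtain ⟨hle, _, hquot⟩ := hH i
      have e := (subgroupOfEquivOfLe hle).symm
      refine isSolvable_or_isSolvableBy_of_normal card_alternatingGroup_five ?_
        (ih.imp (isSolvable_of_mulEquiv e) (.of_mulEquiv e)) hquot
      rintro ⟨g, hg⟩
      exact h6 ⟨g, by rwa [orderOf_coe]⟩
  have e : H (Fin.last n) ≃* G := (MulEquiv.subgroupCongr h_last).trans topEquiv
  exact (hH_or (Fin.last n)).imp (isSolvable_of_mulEquiv e) (.of_mulEquiv e)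

end PseudoSolvable

theorem three_adjacent_to_all_other_primes_general {G : Type*} [Group G] [Finite G]
    (hG : IsPseudoSolvable G) (hns : ¬ Group.IsSolvable G) (h6 : ¬ ∃ g : G, orderOf g = 6) {p : ℕ}
    (hp : p.Prime) (hpG : p ∣ Nat.card G) (hp_ne : p ∉ ({2, 3, 5} : Set ℕ)) :
    ∃ g : G, orderOf g = 3 * p := by
  obtain ⟨f, hf, -⟩ := (hG.isSolvable_or_isSolvableBy h6).resolve_left hns
  have : Fact p.Prime := ⟨hp⟩
  simp only [Set.mem_insert_iff, Set.mem_singleton_iff, not_or] at hp_ne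
  have h2p : Nat.Coprime 2 p := (Nat.coprime_primes Nat.prime_two hp).mpr (Ne.symm hp_ne.1)
  have h3p : Nat.Coprime 3 p := (Nat.coprime_primes Nat.prime_three hp).mpr (Ne.symm hp_ne.2.1)
  have h5p : Nat.Coprime 5 p := (Nat.coprime_primes Nat.prime_five hp).mpr (Ne.symm hp_ne.2.2)
  have hpker : p ∣ Nat.card f.ker := by
    have h60 : Nat.Coprime (2 * 2 * 3 * 5) p := ((h2p.mul_left h2p).mul_left h3p).mul_left h5p
    refine h60.symm.dvd_of_dvd_mul_right ?_
    rwa [← f.ker.card_mul_index, index_ker, MonoidHom.range_eq_top.mpr hf, card_top,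
      card_alternatingGroup_five] at hpG
  let S : Sylow 2 (alternatingGroup (Fin 5)) := default
  have h2 : 2 ∣ Nat.card (alternatingGroup (Fin 5)) := by
    rw [card_alternatingGroup_five]
    norm_num
  have h3 : 3 ∣ Nat.card (normalizer (S : Set (alternatingGroup (Fin 5)))) := by
    rw [card_normalizer_sylow_two card_alternatingGroup_five]
    norm_num
  exact exists_orderOf_eq_mul_of_dvd_card_ker hf hpker S h2 h3 (by norm_num) h3p
    (Ne.symm hp_ne.1) h6

/-- If `G` is a non-solvable pseudo-solvable group whose prime-graph complement has
the triangle `{2,3,5}`, then `3 - p` is not an edge of the complement for any other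
prime `p` dividing `|G|`; i.e. `G` has an element of order `3p`. -/
theorem three_adjacent_to_all_other_primes
    (G : Type*) [Group G] [Finite G] (hG : IsPseudoSolvable G) (hns : ¬ IsSolvable G)
    (h6 : ¬ ∃ g : G, orderOf g = 6)
    (h10 : ¬ ∃ g : G, orderOf g = 10)
    (h15 : ¬ ∃ g : G, orderOf g = 15) :
    ∀ p : ℕ, p.Prime → p ∣ Nat.card G → p ∉ ({2, 3, 5} : Set ℕ) →
      ∃ g : G, orderOf g = 3 * p :=
  fun _ hp hpG hp_ne ↦ three_adjacent_to_all_other_primes_general hG hns h6 hp hpG hp_ne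
end

section
/- Let G be a finite group and p a prime not dividing |G|. Let V be a finite-dimensional complex vector space and π : G → GL(V) a representation of G over ℂ. Then there exist n ≥ 1 and a finite-dimensional representation σ : G → GL(W) of G over the finite field K with pⁿ elements such that for every g ∈ G, the K-dimension of the fixed space {w ∈ W : σ(g)w = w} equals the ℂ-dimension of the fixed space {v ∈ V : π(g)v = v}. In particular, for every g ∈ G, π(g) has a nonzero fixed vector if and only if σ(g) has a nonzero fixed vector. -/
/-!
Choose a valuation ring `B` of the coefficient field in which `p` is not invertible. The span over
`B` of the translates of a basis is a stable lattice, and it is free because `B` is a valuation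
ring. The matrices in a basis of this lattice have entries in `B`, hence in a finitely generated
ring `R` in which `p` is not invertible. A maximal ideal of `R` containing `p` has a finite residue
field of characteristic `p`, to which the matrices can be reduced.

A ring homomorphism can only kill minors, so under reduction the ranks of `A - 1` and of
`1 + A + ⋯ + A ^ (d - 1)` can only drop. If `A ^ d = 1` and `d` is invertible, the image of the
second is the kernel of the first, so the two ranks add up to the size of `A` both before and after
reduction. Hence neither of them drops.
-/

open Module
open scoped Matrix

section MinorsAndRank

variable {k : Type*} [Field k] {m n : Type*} [Fintype n]

lemma exists_linearIndependent_col_submatrix (A : Matrix m n k) :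
    ∃ c : Fin A.rank → n, LinearIndependent k (A.submatrix id c).col := by
  obtain ⟨κ, a, ha, hspan, hli⟩ := exists_linearIndependent' k A.col
  have : Finite κ := Finite.of_injective a ha
  have := Fintype.ofFinite κ
  have hcard : A.rank = Fintype.card κ := by
    rw [Matrix.rank_eq_finrank_span_cols, ← hspan, finrank_span_eq_card hli]
  let e : Fin A.rank ≃ κ := (finCongr hcard).trans (Fintype.equivFin κ).symm
  exact ⟨a ∘ e, hli.comp e e.injective⟩

lemma exists_det_submatrix_ne_zero [Finite m] (A : Matrix m n k) :
    ∃ (r : Fin A.rank → m) (c : Fin A.rank → n), (A.submatrix r c).det ≠ 0 := by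
  have := Fintype.ofFinite m
  obtain ⟨c, hc⟩ := exists_linearIndependent_col_submatrix A
  have hrank : (A.submatrix id c)ᵀ.rank = A.rank := by
    simpa only [Fintype.card_fin] using LinearIndependent.rank_matrix (M := (A.submatrix id c)ᵀ) hc
  have hrows := exists_linearIndependent_col_submatrix (A.submatrix id c)ᵀ
  rw [hrank] at hrows
  obtain ⟨r, hr⟩ := hrows
  have hunit : IsUnit (A.submatrix r c) := Matrix.linearIndependent_rows_iff_isUnit.1 hr
  exact ⟨r, c, ((Matrix.isUnit_iff_isUnit_det _).1 hunit).ne_zero⟩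

lemma rank_map_le_rank_map_of_injective [Finite m] {R K : Type*} [CommRing R] [Field K]
    {f : R →+* K} (hf : Function.Injective f) (h : R →+* k) (A : Matrix m n R) :
    (A.map h).rank ≤ (A.map f).rank := by
  obtain ⟨r, c, hdet⟩ := exists_det_submatrix_ne_zero (A.map h)
  have hminor : h (A.submatrix r c).det ≠ 0 := by rwa [RingHom.map_det]
  have hminor' : ((A.map f).submatrix r c).det ≠ 0 := by
    have : f (A.submatrix r c).det ≠ 0 := (map_ne_zero_iff f hf).2 (ne_zero_of_map hminor)
    rwa [RingHom.map_det] at this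
  calc (A.map h).rank = ((A.map f).submatrix r c).rank := by
        rw [Matrix.rank_of_det_ne_zero hminor', Fintype.card_fin]
    _ ≤ (A.map f).rank := Matrix.rank_submatrix_le _ _ _

end MinorsAndRank

section FixedSpace

lemma range_sum_pow_eq_ker_sub_one {R M : Type*} [CommRing R] [AddCommGroup M] [Module R M]
    {T : End R M} {d : ℕ} (hd : IsUnit (d : R)) (hT : T ^ d = 1) :
    LinearMap.range (∑ i ∈ Finset.range d, T ^ i) = LinearMap.ker (T - 1) := by
  apply le_antisymm
  · rw [LinearMap.range_le_ker_iff, ← Module.End.mul_eq_comp, mul_geom_sum, hT, sub_self]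
  · intro v hv
    have hfix : T v = v := by
      simpa only [LinearMap.mem_ker, LinearMap.sub_apply, End.one_apply, sub_eq_zero] using hv
    have hpow (i : ℕ) : (T ^ i) v = v := by
      rw [End.pow_apply]
      exact Function.IsFixedPt.iterate hfix i
    obtain ⟨u, hu⟩ := hd
    refine ⟨(↑u⁻¹ : R) • v, ?_⟩
    calc (∑ i ∈ Finset.range d, T ^ i) ((↑u⁻¹ : R) • v) = (↑u⁻¹ : R) • (d : R) • v := by
          simp only [map_smul, LinearMap.sum_apply, hpow, Finset.sum_const, Finset.card_range,
            Nat.cast_smul_eq_nsmul]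
      _ = v := by rw [← hu, smul_smul, Units.inv_mul, one_smul]

lemma exists_ne_zero_apply_eq_self_iff {k W : Type*} [Field k] [AddCommGroup W] [Module k W]
    [FiniteDimensional k W] (T : End k W) :
    (∃ v, v ≠ 0 ∧ T v = v) ↔ finrank k (LinearMap.ker (T - 1)) ≠ 0 := by
  simp only [ne_eq, Submodule.finrank_eq_zero, Submodule.eq_bot_iff, LinearMap.mem_ker,
    LinearMap.sub_apply, End.one_apply, sub_eq_zero, not_forall, exists_prop, and_comm]

variable {k : Type*} [Field k] {n : Type*} [Fintype n] [DecidableEq n]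

lemma rank_toMatrix_sub_one_add_finrank_ker {V : Type*} [AddCommGroup V] [Module k V]
    (b : Basis n k V) (T : End k V) :
    (LinearMap.toMatrix b b T - 1).rank + finrank k (LinearMap.ker (T - 1)) = Fintype.card n := by
  have hmatrix : LinearMap.toMatrix b b (T - 1) = LinearMap.toMatrix b b T - 1 := by
    rw [map_sub, LinearMap.toMatrix_one]
  have := b.finiteDimensional_of_finite
  rw [← hmatrix, Matrix.rank_eq_finrank_range_toLin _ b b, Matrix.toLin_toMatrix,
    ← finrank_eq_card_basis b]
  exact LinearMap.finrank_range_add_finrank_ker (T - 1)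

lemma rank_sub_one_add_rank_sum_pow {A : Matrix n n k} {d : ℕ} (hd : (d : k) ≠ 0)
    (hA : A ^ d = 1) :
    (A - 1).rank + (∑ i ∈ Finset.range d, A ^ i).rank = Fintype.card n := by
  have hT : Matrix.toLinAlgEquiv' A ^ d = 1 := by rw [← map_pow, hA, map_one]
  have hker := range_sum_pow_eq_ker_sub_one hd.isUnit hT
  simp only [← map_pow, ← map_sum] at hker
  rw [← map_one Matrix.toLinAlgEquiv', ← map_sub] at hker
  have hdim := LinearMap.finrank_range_add_finrank_ker (Matrix.toLinAlgEquiv' (A - 1))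
  rwa [← hker, finrank_fintype_fun_eq_card] at hdim

lemma rank_map_sub_one_eq {R K : Type*} [CommRing R] [Field K] {f : R →+* K}
    (hf : Function.Injective f) (h : R →+* k) {A : Matrix n n R} {d : ℕ} (hd : (d : k) ≠ 0)
    (hA : A ^ d = 1) : (A.map h - 1).rank = (A.map f - 1).rank := by
  have hdK : (d : K) ≠ 0 := by
    rw [← map_natCast f, map_ne_zero_iff f hf]
    exact ne_zero_of_map (f := h) (by rwa [map_natCast])
  have hsumk := rank_sub_one_add_rank_sum_pow (A := h.mapMatrix A) hd (by
    rw [← map_pow, hA, map_one])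
  have hsumK := rank_sub_one_add_rank_sum_pow (A := f.mapMatrix A) hdK (by
    rw [← map_pow, hA, map_one])
  have hle := rank_map_le_rank_map_of_injective hf h (A - 1)
  have hle' := rank_map_le_rank_map_of_injective hf h (∑ i ∈ Finset.range d, A ^ i)
  simp only [← RingHom.mapMatrix_apply, map_sub, map_one, map_sum, map_pow] at hle hle' ⊢
  omega

lemma finrank_ker_sub_one_eq_of_map_eq_toMatrix {R K V W : Type*} [CommRing R] [Field K]
    [AddCommGroup V] [Module K V] [AddCommGroup W] [Module k W] {f : R →+* K}
    (hf : Function.Injective f) {h : R →+* k} {A : Matrix n n R} {b : Basis n K V}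
    {S : End K V} (hS : A.map f = LinearMap.toMatrix b b S) {c : Basis n k W} {T : End k W}
    (hT : A.map h = LinearMap.toMatrix c c T) (horder : (orderOf S : k) ≠ 0) :
    finrank k (LinearMap.ker (T - 1)) = finrank K (LinearMap.ker (S - 1)) := by
  have hA : A ^ orderOf S = 1 := by
    apply Matrix.map_injective hf
    simp only [← RingHom.mapMatrix_apply] at hS ⊢
    rw [map_pow, map_one, hS, LinearMap.toMatrix_pow, pow_orderOf_eq_one, LinearMap.toMatrix_one]
  have hrank := rank_map_sub_one_eq hf h horder hA
  have hdimS := rank_toMatrix_sub_one_add_finrank_ker b S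
  have hdimT := rank_toMatrix_sub_one_add_finrank_ker c T
  rw [← hS] at hdimS
  rw [← hT] at hdimT
  omega

end FixedSpace

section StableLattice

variable {B K V : Type*} [CommRing B] [Field K] [Algebra B K] [AddCommGroup V] [Module K V]
  [Module B V] [IsScalarTower B K V]

lemma exists_isLattice_stable [FiniteDimensional K V] {G : Type*} [Monoid G]
    {π : Representation K G V} (hπ : (Set.range π).Finite) :
    ∃ L : Submodule B V, L.IsLattice K ∧ ∀ g, ∀ x ∈ L, π g x ∈ L := by
  let b := finBasis K V
  let orbit : Set V := Set.image2 (fun T v ↦ T v) (Set.range π) (Set.range b)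
  have hb : Set.range b ⊆ orbit := fun v hv ↦ ⟨1, ⟨1, map_one π⟩, v, hv, rfl⟩
  refine ⟨Submodule.span B orbit, ⟨?_, ?_⟩, fun g x hx ↦ ?_⟩
  · exact Submodule.fg_span (hπ.image2 _ (Set.finite_range b))
  · rw [Submodule.span_span_of_tower, eq_top_iff, ← b.span_eq]
    exact Submodule.span_mono hb
  · have hle : Submodule.span B orbit ≤
        (Submodule.span B orbit).comap ((π g).restrictScalars B) := by
      refine Submodule.span_le.2 ?_
      rintro _ ⟨_, ⟨g', rfl⟩, v, hv, rfl⟩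
      exact Submodule.subset_span ⟨π (g * g'), ⟨g * g', rfl⟩, v, hv, by rw [map_mul]; rfl⟩
    exact hle hx

lemma repr_extendOfIsLattice [IsFractionRing B K] {L : Submodule B V} [L.IsLattice K]
    {ι : Type*} [Finite ι] (c : Basis ι B L) (x : L) (i : ι) :
    (c.extendOfIsLattice K).repr x i = algebraMap B K (c.repr x i) := by
  have := Fintype.ofFinite ι
  have hx : (x : V) = ∑ j, algebraMap B K (c.repr x j) • c.extendOfIsLattice K j := by
    conv_lhs => rw [← c.sum_repr x]
    simp only [Submodule.coe_sum, Submodule.coe_smul, algebraMap_smul,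
      Basis.extendOfIsLattice_apply]
  rw [hx, Basis.repr_sum_self]

lemma free_of_isLattice_of_valuationRing [IsDomain B] [ValuationRing B] [FaithfulSMul B K]
    (L : Submodule B V) [L.IsLattice K] : Module.Free B L := by
  have : IsTorsionFree B V := IsTorsionFree.trans_faithfulSMul B K V
  have : Module.Flat B L := by
    rw [Module.Flat.flat_iff_torsion_eq_bot_of_isBezout,
      ← Submodule.isTorsionFree_iff_torsion_eq_bot]
    infer_instance
  exact Module.free_of_flat_of_isLocalRing

variable (B) in
lemma exists_basis_toMatrix_mem_range_algebraMap [IsDomain B] [ValuationRing B] [IsFractionRing B K]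
    [FiniteDimensional K V] {G : Type*} [Monoid G] {π : Representation K G V}
    (hπ : (Set.range π).Finite) :
    ∃ (m : ℕ) (b : Basis (Fin m) K V),
      ∀ g i j, LinearMap.toMatrix b b (π g) i j ∈ (algebraMap B K).range := by
  obtain ⟨L, hL, hstable⟩ := exists_isLattice_stable (B := B) hπ
  have : Module.Free B L := free_of_isLattice_of_valuationRing (K := K) L
  let c := finBasis B L
  refine ⟨_, c.extendOfIsLattice K, fun g i j ↦ ⟨c.repr ⟨π g (c j), hstable g _ (c j).2⟩ i, ?_⟩⟩
  rw [← repr_extendOfIsLattice, LinearMap.toMatrix_apply, Basis.extendOfIsLattice_apply]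

end StableLattice

section IntegralModel

lemma exists_valuationSubring_not_isUnit_natCast (K : Type*) [Field K] [CharZero K] {p : ℕ}
    (hp : p ≠ 1) : ∃ B : ValuationSubring K, ¬ IsUnit (p : B) := by
  let A : Subring K := (Int.castRingHom K).range
  have hinj : Function.Injective (Int.castRingHom K) := Int.cast_injective
  let e : ℤ ≃+* A := .ofBijective (Int.castRingHom K).rangeRestrict
    ⟨fun x y hxy ↦ hinj (congrArg Subtype.val hxy), (Int.castRingHom K).rangeRestrict_surjective⟩
  have hunit : ¬ IsUnit (p : A) := by
    rwa [← map_natCast e, MulEquiv.isUnit_map, Int.ofNat_isUnit, Nat.isUnit_iff]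
  have hspan : Ideal.span {(p : A)} ≠ ⊤ := by rwa [Ne, Ideal.span_singleton_eq_top]
  obtain ⟨B, -, hB⟩ := Ideal.image_subset_nonunits_valuationSubring _ hspan
  have hpB : ((p : B) : K) ∈ B.nonunits := hB ⟨p, Ideal.mem_span_singleton_self _, rfl⟩
  exact ⟨B, (IsLocalRing.mem_maximalIdeal _).1 (ValuationSubring.coe_mem_nonunits_iff.1 hpB)⟩

lemma exists_monoidHom_map_eq {G R S n : Type*} [Monoid G] [Ring R] [Ring S] [Fintype n]
    [DecidableEq n] {f : R →+* S} (hf : Function.Injective f) (ρ : G →* Matrix n n S)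
    (hρ : ∀ g i j, ρ g i j ∈ f.range) :
    ∃ ρ' : G →* Matrix n n R, ∀ g, (ρ' g).map f = ρ g := by
  choose ρ' hρ' using hρ
  have hmap (g : G) : f.mapMatrix (Matrix.of (ρ' g)) = ρ g := Matrix.ext (hρ' g)
  have hinj : Function.Injective (f.mapMatrix (m := n)) := Matrix.map_injective hf
  refine ⟨⟨⟨fun g ↦ Matrix.of (ρ' g), hinj ?_⟩, fun g g' ↦ hinj ?_⟩, hmap⟩
  · rw [hmap, map_one, map_one]
  · rw [map_mul, hmap, hmap, hmap, map_mul]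

lemma exists_finiteType_integral_model {K V G : Type*} [Field K] [CharZero K] [AddCommGroup V]
    [Module K V] [FiniteDimensional K V] [Monoid G] {π : Representation K G V}
    (hπ : (Set.range π).Finite) {p : ℕ} (hp : p ≠ 1) :
    ∃ R : Subalgebra ℤ K, Algebra.FiniteType ℤ R ∧ ¬ IsUnit (p : R) ∧
      ∃ (m : ℕ) (b : Basis (Fin m) K V) (ρ : G →* Matrix (Fin m) (Fin m) R),
        ∀ g, (ρ g).map (algebraMap R K) = LinearMap.toMatrix b b (π g) := by
  obtain ⟨B, hpB⟩ := exists_valuationSubring_not_isUnit_natCast K hp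
  obtain ⟨m, b, hb⟩ := exists_basis_toMatrix_mem_range_algebraMap B hπ
  let entries : Set K :=
    Set.image2 (fun T (ij : Fin m × Fin m) ↦ LinearMap.toMatrix b b T ij.1 ij.2)
      (Set.range π) Set.univ
  have hentries : entries.Finite := hπ.image2 _ Set.finite_univ
  let R : Subalgebra ℤ K := Algebra.adjoin ℤ entries
  have hRB : R ≤ subalgebraOfSubring B.toSubring := by
    refine Algebra.adjoin_le ?_
    rintro _ ⟨_, ⟨g, rfl⟩, ij, -, rfl⟩
    obtain ⟨x, hx⟩ := hb g ij.1 ij.2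
    change LinearMap.toMatrix b b (π g) ij.1 ij.2 ∈ B
    exact hx ▸ x.2
  let ι : R →+* B := (algebraMap R K).codRestrict B fun x ↦ hRB x.2
  have hpR : ¬ IsUnit (p : R) := fun hunit ↦ hpB (map_natCast ι p ▸ hunit.map ι)
  obtain ⟨ρ, hρ⟩ := exists_monoidHom_map_eq (f := algebraMap R K) Subtype.val_injective
    ((LinearMap.toMatrixAlgEquiv b).toMonoidHom.comp π)
    fun g i j ↦ ⟨⟨_, Algebra.subset_adjoin ⟨π g, ⟨g, rfl⟩, (i, j), trivial, rfl⟩⟩, rfl⟩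
  exact ⟨R, .adjoin_of_finite hentries, hpR, m, b, ρ, hρ⟩

end IntegralModel

section FiniteResidueField

variable (p : ℕ) [Fact p.Prime]

lemma finite_of_surjective_of_finiteType_int {R k : Type*} [CommRing R] [Algebra.FiniteType ℤ R]
    [Field k] [CharP k p] {f : R →+* k} (hf : Function.Surjective f) : Finite k := by
  let _ : Algebra (ZMod p) k := ZMod.algebra k p
  have : Algebra.FiniteType ℤ k := .of_surjective f.toIntAlgHom hf
  have : Algebra.FiniteType (ZMod p) k := .of_restrictScalars_finiteType ℤ (ZMod p) k
  have : Module.Finite (ZMod p) k := finite_of_finite_type_of_isJacobsonRing (ZMod p) k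
  exact Module.finite_of_finite (ZMod p)

lemma exists_ringEquiv_galoisField (k : Type*) [Field k] [Finite k] [CharP k p] :
    ∃ n : ℕ, 1 ≤ n ∧ Nonempty (k ≃+* GaloisField p n) := by
  let _ : Algebra (ZMod p) k := ZMod.algebra k p
  have hcard : Nat.card k = p ^ finrank (ZMod p) k := by
    rw [natCard_eq_pow_finrank (K := ZMod p), Nat.card_zmod]
  exact ⟨_, finrank_pos, ⟨(GaloisField.algEquivGaloisField p _ hcard).toRingEquiv⟩⟩

variable {p}

lemma exists_ringHom_galoisField {R : Type*} [CommRing R] [Algebra.FiniteType ℤ R]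
    (hp : ¬ IsUnit (p : R)) : ∃ n : ℕ, 1 ≤ n ∧ Nonempty (R →+* GaloisField p n) := by
  obtain ⟨M, hM, hpM⟩ := exists_max_ideal_of_mem_nonunits hp
  let _ : Field (R ⧸ M) := Ideal.Quotient.field M
  have : CharP (R ⧸ M) p := by
    rw [CharP.charP_iff_prime_eq_zero Fact.out, ← map_natCast (Ideal.Quotient.mk M)]
    exact Ideal.Quotient.eq_zero_iff_mem.2 hpM
  have : Finite (R ⧸ M) :=
    finite_of_surjective_of_finiteType_int p (Ideal.Quotient.mk_surjective (I := M))
  obtain ⟨n, hn, ⟨e⟩⟩ := exists_ringEquiv_galoisField p (R ⧸ M)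
  exact ⟨n, hn, ⟨e.toRingHom.comp (Ideal.Quotient.mk M)⟩⟩

end FiniteResidueField

/-- If `π g` has no finite order then `orderOf (π g) = 0`, which `p` divides. -/
theorem modular_reduction_preserves_fixed_points_general
    {G : Type*} [Monoid G] (p : ℕ) [Fact p.Prime] {K : Type*} [Field K] [CharZero K]
    {V : Type*} [AddCommGroup V] [Module K V] [FiniteDimensional K V]
    (π : Representation K G V) (hπ : (Set.range π).Finite) :
    ∃ n : ℕ, 1 ≤ n ∧
      ∃ (m : ℕ) (σ : Representation (GaloisField p n) G (Fin m → GaloisField p n)),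
        ∀ g : G, ¬ p ∣ orderOf (π g) →
          finrank (GaloisField p n) (LinearMap.ker (σ g - 1)) =
            finrank K (LinearMap.ker (π g - 1)) ∧
          ((∃ v : V, v ≠ 0 ∧ π g v = v) ↔
            ∃ w : Fin m → GaloisField p n, w ≠ 0 ∧ σ g w = w) := by
  obtain ⟨R, hR, hpR, m, b, ρ, hρ⟩ :=
    exists_finiteType_integral_model hπ (Fact.out : p.Prime).ne_one
  obtain ⟨n, hn, ⟨h⟩⟩ := exists_ringHom_galoisField hpR
  let σ : Representation (GaloisField p n) G (Fin m → GaloisField p n) :=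
    (Matrix.toLinAlgEquiv' (R := GaloisField p n)).toMonoidHom.comp
      (h.mapMatrix.toMonoidHom.comp ρ)
  have hσ (g : G) : (ρ g).map h =
      LinearMap.toMatrix (Pi.basisFun _ _) (Pi.basisFun _ _) (σ g) :=
    (LinearMap.toMatrix'_toLin' _).symm
  have hdim (g : G) (hg : ¬ p ∣ orderOf (π g)) :
      finrank (GaloisField p n) (LinearMap.ker (σ g - 1)) =
        finrank K (LinearMap.ker (π g - 1)) :=
    finrank_ker_sub_one_eq_of_map_eq_toMatrix Subtype.val_injective (hρ g) (hσ g)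
      (by rwa [Ne, CharP.cast_eq_zero_iff (GaloisField p n) p])
  refine ⟨n, hn, m, σ, fun g hg ↦ ⟨hdim g hg, ?_⟩⟩
  rw [exists_ne_zero_apply_eq_self_iff, exists_ne_zero_apply_eq_self_iff, hdim g hg]

/-- Reduction of a complex representation modulo a prime `p` not dividing `|G|`,
preserving the dimensions of fixed-point spaces of all group elements:
there exist `n ≥ 1` and a representation of `G` on a finite-dimensional vector space
over the field `GaloisField p n` with `pⁿ` elements such that every `g ∈ G` has a
fixed space of the same dimension as in the original complex representation.
In particular, `g` has a nonzero fixed vector in one representation iff it does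
in the other. -/
theorem modular_reduction_preserves_fixed_points
    (G : Type*) [Group G] [Finite G] (p : ℕ) [hp : Fact p.Prime]
    (hpG : ¬ p ∣ Nat.card G)
    (V : Type*) [AddCommGroup V] [Module ℂ V] [FiniteDimensional ℂ V]
    (π : Representation ℂ G V) :
    ∃ (n : ℕ), 1 ≤ n ∧
      ∃ (m : ℕ) (σ : Representation (GaloisField p n) G (Fin m → GaloisField p n)),
        (∀ g : G,
          Module.finrank (GaloisField p n) (LinearMap.ker (σ g - 1)) =
            Module.finrank ℂ (LinearMap.ker (π g - 1))) ∧
        (∀ g : G,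
          (∃ v : V, v ≠ 0 ∧ π g v = v) ↔
            (∃ w : Fin m → GaloisField p n, w ≠ 0 ∧ σ g w = w)) := by
  obtain ⟨n, hn, m, σ, hσ⟩ :=
    modular_reduction_preserves_fixed_points_general p π (Set.finite_range π)
  have hg (g : G) := hσ g fun h ↦
    hpG (h.trans ((orderOf_map_dvd π g).trans (orderOf_dvd_natCard g)))
  exact ⟨n, hn, m, σ, fun g ↦ (hg g).1, fun g ↦ (hg g).2⟩
end

section
/- Let A and B be finite groups such that |B| is squarefree, and let F be a nilpotent normal subgroup of B (so F is a direct product of cyclic groups of distinct prime orders). Let π : A → GL(U) be a finite-dimensional complex representation of A, and let r be a prime such that |A × B| divides r − 1. Then there exist a finite field K of characteristic r and a finite-dimensional K-representation ρ : A × B → GL(V) such that: (1) for every a ∈ A, π(a) has no nonzero fixed vector in U if and only if ρ(a,1) has no nonzero fixed vector in V; (2) for every nontrivial f ∈ F, ρ(1,f) has no nonzero fixed vector in V. -/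
/-!
Since the `N`-th power of an element `a` of a group of order `N` is trivial, a matrix `M`
representing it over a domain satisfies `M ^ N = 1`. If `M - 1` is regular then
`1 + M + ⋯ + M ^ (N - 1) = 0`, so `M - 1` divides `∑ (M ^ i - 1) = -N` and
`det (M - 1)` divides a power of `N`. Reduction modulo `r ∤ N` therefore neither creates nor
destroys nonzero fixed vectors. A representation in characteristic zero becomes integral over a
valuation ring in which `r` is not a unit, hence over a finitely generated subring, whose residue
field at a maximal ideal containing `r` is finite; enlarge it to contain the `|F|`-th roots of
unity.

On the other side, a faithful character of the cyclic group `F` coinduced to `B` is fixed point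
free on `F ∖ {1}`, because `F` is normal. The tensor product of the two representations has both
properties, since tensoring over a field preserves and reflects injectivity of `T - 1`.
-/

open TensorProduct Module Representation Submodule

section IsFixedPointFree

/-- An endomorphism without nonzero fixed vectors. A group element `g` acts fixed point freely
under a representation `ρ` when `IsFixedPointFree (ρ g)`. -/
def IsFixedPointFree {R V : Type*} [Semiring R] [AddCommMonoid V] [Module R V]
    (T : Module.End R V) : Prop :=
  ∀ v, T v = v → v = 0

theorem isFixedPointFree_iff_not_exists {R V : Type*} [Semiring R] [AddCommMonoid V] [Module R V]
    {T : Module.End R V} : IsFixedPointFree T ↔ ¬ ∃ v, v ≠ 0 ∧ T v = v := by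
  simp only [IsFixedPointFree, not_exists, not_and', not_not]

theorem isFixedPointFree_conj_iff {R V W : Type*} [CommSemiring R] [AddCommMonoid V] [Module R V]
    [AddCommMonoid W] [Module R W] (e : V ≃ₗ[R] W) {T : Module.End R V} :
    IsFixedPointFree (e.conj T) ↔ IsFixedPointFree T := by
  simp [IsFixedPointFree, e.surjective.forall, LinearEquiv.conj_apply]

theorem isFixedPointFree_iff_injective_sub_one {R V : Type*} [Ring R] [AddCommGroup V] [Module R V]
    {T : Module.End R V} : IsFixedPointFree T ↔ Function.Injective ⇑(T - 1) := by
  simp [IsFixedPointFree, injective_iff_map_eq_zero, sub_eq_zero]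

variable {R V W : Type*} [CommRing R] [AddCommGroup V] [Module R V] [AddCommGroup W] [Module R W]

theorem IsFixedPointFree.rTensor [Flat R W] {T : Module.End R V} (hT : IsFixedPointFree T) :
    IsFixedPointFree (T.rTensor W) := by
  rw [isFixedPointFree_iff_injective_sub_one] at hT ⊢
  simpa [LinearMap.rTensor_sub, End.one_eq_id] using
    Flat.rTensor_preserves_injective_linearMap (M := W) _ hT

theorem isFixedPointFree_lTensor_iff [FaithfullyFlat R W] {T : Module.End R V} :
    IsFixedPointFree (T.lTensor W) ↔ IsFixedPointFree T := by
  have := FaithfullyFlat.lTensor_injective_iff_injective R W (f := T - 1)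
  rwa [LinearMap.lTensor_sub, End.one_eq_id, LinearMap.lTensor_id, ← End.one_eq_id,
    ← End.one_eq_id, ← isFixedPointFree_iff_injective_sub_one,
    ← isFixedPointFree_iff_injective_sub_one] at this

theorem isFixedPointFree_iff_det_toMatrix [IsDomain R] {ι : Type*} [Fintype ι] [DecidableEq ι]
    (b : Basis ι R V) {T : Module.End R V} :
    IsFixedPointFree T ↔ (LinearMap.toMatrix b b T - 1).det ≠ 0 := by
  have := Module.Free.of_basis b
  have := Module.Finite.of_basis b
  rw [isFixedPointFree_iff_injective_sub_one, ← LinearMap.ker_eq_bot, ← LinearMap.toMatrix_one b,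
    ← map_sub, LinearMap.det_toMatrix, Ne, LinearMap.det_eq_zero_iff_ker_ne_bot, not_not]

theorem exists_representation_fin_isFixedPointFree_iff {k G V : Type*} [Field k] [Monoid G]
    [AddCommGroup V] [Module k V] [FiniteDimensional k V] (ρ : Representation k G V) :
    ∃ (m : ℕ) (ρ' : Representation k G (Fin m → k)),
      ∀ g, IsFixedPointFree (ρ' g) ↔ IsFixedPointFree (ρ g) := by
  let e := (finBasis k V).equivFun
  exact ⟨_, (e.conjAlgEquiv k).toMonoidHom.comp ρ, fun g ↦ isFixedPointFree_conj_iff e⟩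

end IsFixedPointFree

section FiniteOrder

variable {R d : Type*} [CommRing R] [IsDomain R] [Fintype d] [DecidableEq d]
  {M : Matrix d d R} {N : ℕ}

theorem det_sub_one_dvd_natCast_pow (hM : M ^ N = 1) (hdet : (M - 1).det ≠ 0) :
    (M - 1).det ∣ (N : R) ^ Fintype.card d := by
  have hsum : ∑ i ∈ Finset.range N, M ^ i = 0 :=
    (Matrix.isRegular_of_isLeftRegular_det
      (IsLeftCancelMulZero.mul_left_cancel_of_ne_zero hdet)).left (by simp [mul_geom_sum, hM])
  have hdvd : M - 1 ∣ ∑ i ∈ Finset.range N, (M ^ i - 1) :=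
    Finset.dvd_sum fun i _ ↦ sub_one_dvd_pow_sub_one M i
  simp only [Finset.sum_sub_distrib, hsum, zero_sub, dvd_neg, Finset.sum_const, Finset.card_range,
    nsmul_one] at hdvd
  simpa [← Matrix.diagonal_natCast] using map_dvd Matrix.detMonoidHom hdvd

theorem det_mapMatrix_sub_one_ne_zero_iff {S : Type*} [CommRing S] [IsDomain S] (φ : R →+* S)
    (hM : M ^ N = 1) (hN : (N : S) ≠ 0) :
    (φ.mapMatrix M - 1).det ≠ 0 ↔ (M - 1).det ≠ 0 := by
  have hmap : (φ.mapMatrix M - 1).det = φ (M - 1).det := by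
    rw [RingHom.map_det, map_sub, map_one]
  rw [hmap]
  refine ⟨fun h h0 ↦ h (by rw [h0, map_zero]), fun hdet ↦ ?_⟩
  have hdvd := map_dvd φ (det_sub_one_dvd_natCast_pow hM hdet)
  rw [map_pow, map_natCast] at hdvd
  exact ne_zero_of_dvd_ne_zero (pow_ne_zero _ hN) hdvd

end FiniteOrder

section Coinduction

variable {k G H V : Type*} [Semiring k] [Monoid H] [AddCommMonoid V] [Module k V]

theorem isFixedPointFree_coind [Monoid G] (φ : G →* H) (ψ : Representation k G V) {h : H}
    (hh : ∀ x : H, ∃ g, φ g * x = x * h ∧ IsFixedPointFree (ψ g)) :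
    IsFixedPointFree (coind φ ψ h) := by
  intro f hf
  ext x
  obtain ⟨g, hg, hfree⟩ := hh x
  refine hfree _ ?_
  rw [← f.2 g x, hg]
  exact congr_fun (congr_arg Subtype.val hf) x

theorem nontrivial_coindV [Group G] [Nontrivial V] {φ : G →* H} (hφ : Function.Injective φ)
    (ψ : Representation k G V) : Nontrivial (coindV φ ψ) := by
  obtain ⟨v, hv⟩ := exists_ne (0 : V)
  have hmem : Function.extend φ (ψ · v) 0 ∈ coindV φ ψ := by
    intro g h
    by_cases hh : ∃ g', φ g' = h
    · obtain ⟨g', rfl⟩ := hh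
      rw [← map_mul, hφ.extend_apply, hφ.extend_apply, map_mul, End.mul_apply]
    · have hgh : ¬ ∃ g', φ g' = φ g * h := fun ⟨g', hg'⟩ ↦
        hh ⟨g⁻¹ * g', by
          rw [map_mul, hg', ← mul_assoc, ← map_mul, inv_mul_cancel, map_one, one_mul]⟩
      simp [Function.extend_apply' _ _ _ hh, Function.extend_apply' _ _ _ hgh]
  refine nontrivial_of_ne ⟨_, hmem⟩ 0 fun h0 ↦ hv ?_
  calc v = Function.extend φ (ψ · v) 0 (φ 1) := by rw [hφ.extend_apply, map_one, End.one_apply]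
    _ = 0 := congr_fun (congr_arg Subtype.val h0) (φ 1)

end Coinduction

section Character

variable (F K : Type*) [Group F] [Finite F] [IsCyclic F]

theorem exists_injective_monoidHom_units [CommMonoid K] [HasEnoughRootsOfUnity K (Nat.card F)] :
    ∃ χ : F →* Kˣ, Function.Injective χ := by
  have : NeZero (Nat.card F) := ⟨Nat.card_pos.ne'⟩
  let e : F ≃* rootsOfUnity (Nat.card F) K :=
    mulEquivOfCyclicCardEq (HasEnoughRootsOfUnity.natCard_rootsOfUnity K _).symm
  exact ⟨(rootsOfUnity _ K).subtype.comp e.toMonoidHom, Subtype.val_injective.comp e.injective⟩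

theorem exists_representation_isFixedPointFree_of_ne_one [CommRing K] [IsDomain K]
    [HasEnoughRootsOfUnity K (Nat.card F)] :
    ∃ ψ : Representation K F K, ∀ f ≠ 1, IsFixedPointFree (ψ f) := by
  obtain ⟨χ, hχ⟩ := exists_injective_monoidHom_units F K
  refine ⟨(algebraMap K (Module.End K K)).toMonoidHom.comp ((Units.coeHom K).comp χ),
    fun f hf v hv ↦ ?_⟩
  have hχf : (χ f : K) ≠ 1 := by simpa using (map_ne_one_iff χ hχ).mpr hf
  exact by_contra fun hv0 ↦ hχf (mul_right_cancel₀ hv0 (hv.trans (one_mul v).symm))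

end Character

section Integrality

variable {O k A U : Type*} [CommRing O] [Field k] [Algebra O k] [Monoid A] [Finite A]
  [AddCommGroup U] [Module k U]

theorem exists_isLattice_invariant [Module O U] [IsScalarTower O k U] [FiniteDimensional k U]
    (π : Representation k A U) :
    ∃ L : Submodule O U, IsLattice k L ∧ ∀ a, ∀ u ∈ L, π a u ∈ L := by
  let c := finBasis k U
  let L := span O (Set.range fun p : A × Fin (finrank k U) ↦ π p.1 (c p.2))
  refine ⟨L, ⟨fg_span (Set.finite_range _), ?_⟩, fun a ↦ ?_⟩
  · rw [eq_top_iff, ← c.span_eq, span_le]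
    rintro _ ⟨i, rfl⟩
    exact subset_span (subset_span ⟨(1, i), by simp⟩)
  · change L ≤ L.comap ((π a).restrictScalars O)
    rw [span_le]
    rintro _ ⟨⟨a', i⟩, rfl⟩
    exact subset_span ⟨(a * a', i), by simp⟩

theorem free_of_isLattice [IsDomain O] [ValuationRing O] [FaithfulSMul O k] [Module O U]
    [IsScalarTower O k U] (L : Submodule O U) [IsLattice k L] : Module.Free O L := by
  have : IsTorsionFree O U := .trans_faithfulSMul O k U
  have : Flat O L := by
    rw [Flat.flat_iff_torsion_eq_bot_of_isBezout, ← isTorsionFree_iff_torsion_eq_bot]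
    infer_instance
  exact free_of_flat_of_isLocalRing

theorem exists_basis_toMatrix_eq_mapMatrix [IsDomain O] [ValuationRing O] [IsFractionRing O k]
    [FiniteDimensional k U] (π : Representation k A U) :
    ∃ (d : ℕ) (b : Basis (Fin d) k U) (τ : A →* Matrix (Fin d) (Fin d) O),
      ∀ a, LinearMap.toMatrix b b (π a) = (algebraMap O k).mapMatrix (τ a) := by
  let _ : Module O U := Module.compHom U (algebraMap O k)
  have : IsScalarTower O k U := ⟨fun x y u ↦ by rw [Algebra.smul_def, mul_smul]; rfl⟩
  obtain ⟨L, hL, hπ⟩ := exists_isLattice_invariant (O := O) π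
  have := free_of_isLattice (k := k) L
  let e := finBasis O L
  let πL : A →* Module.End O L :=
    { toFun a := ((π a).restrictScalars O).restrict (hπ a)
      map_one' := by ext; simp
      map_mul' a a' := LinearMap.ext fun u ↦
        Subtype.ext <| LinearMap.congr_fun (map_mul π a a') u }
  refine ⟨_, e.extendOfIsLattice k, (LinearMap.toMatrixAlgEquiv e).toMonoidHom.comp πL,
    fun a ↦ ?_⟩
  ext i j
  have hcol : π a (e j) =
      ∑ i, algebraMap O k (e.repr (πL a (e j)) i) • e.extendOfIsLattice k i := by
    simp only [Basis.extendOfIsLattice_apply, algebraMap_smul]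
    exact (congr_arg Subtype.val (e.sum_repr (πL a (e j))).symm).trans
      (by simp only [coe_sum, coe_smul])
  rw [LinearMap.toMatrix_apply, Basis.extendOfIsLattice_apply, hcol, Basis.repr_sum_self]
  exact congr_arg _ (LinearMap.toMatrixAlgEquiv_apply e (πL a) i j).symm

theorem exists_subalgebra_fg_mapMatrix_eq {d : Type*} [Fintype d] [DecidableEq d]
    (τ : A →* Matrix d d O) :
    ∃ (R : Subalgebra ℤ O) (τR : A →* Matrix d d R),
      R.FG ∧ ∀ a, (algebraMap R O).mapMatrix (τR a) = τ a := by
  let entries := Set.range fun p : A × d × d ↦ τ p.1 p.2.1 p.2.2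
  let R := Algebra.adjoin ℤ entries
  let lift (a : A) : Matrix d d R :=
    .of fun i j ↦ ⟨τ a i j, Algebra.subset_adjoin ⟨(a, i, j), rfl⟩⟩
  have hlift (a : A) : (algebraMap R O).mapMatrix (lift a) = τ a := rfl
  have hinj : Function.Injective (algebraMap R O).mapMatrix :=
    Matrix.map_injective (m := d) (n := d) (f := algebraMap R O) Subtype.val_injective
  let τR : A →* Matrix d d R :=
    { toFun := lift
      map_one' := hinj <| by rw [hlift, map_one, map_one]
      map_mul' a a' := hinj <| by rw [map_mul, hlift, hlift, hlift, map_mul] }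
  exact ⟨R, τR, Subalgebra.fg_def.mpr ⟨entries, Set.finite_range _, rfl⟩, hlift⟩

end Integrality

section Reduction

theorem exists_valuationSubring_not_isUnit_natCast_s4 (k : Type*) [Field k] [CharZero k] {r : ℕ}
    (hr : r ≠ 1) : ∃ O : ValuationSubring k, ¬ IsUnit (r : O) := by
  let ℤk := (Int.castRingHom k).range
  let e : ℤ ≃+* ℤk := RingEquiv.ofBijective (Int.castRingHom k).rangeRestrict
    ⟨(Int.castRingHom k).injective_int.codRestrict _, RingHom.rangeRestrict_surjective _⟩
  have hspan : Ideal.span {(r : ℤk)} ≠ ⊤ := by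
    rw [Ne, Ideal.span_singleton_eq_top, ← map_natCast e, MulEquiv.isUnit_map, Int.isUnit_iff]
    omega
  obtain ⟨O, -, hO⟩ := Ideal.image_subset_nonunits_valuationSubring _ hspan
  obtain ⟨_, hmax⟩ := O.mem_nonunits_iff_exists_mem_maximalIdeal.mp
    (hO ⟨_, Ideal.mem_span_singleton_self _, map_natCast ℤk.subtype r⟩)
  exact ⟨O, hmax⟩

theorem exists_isMaximal_finite_quotient_charP {R : Type*} [CommRing R] [Algebra.FiniteType ℤ R]
    {r : ℕ} [Fact r.Prime] (hr : ¬ IsUnit (r : R)) :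
    ∃ M : Ideal R, M.IsMaximal ∧ Finite (R ⧸ M) ∧ CharP (R ⧸ M) r := by
  obtain ⟨M, hM, hrM⟩ := exists_max_ideal_of_mem_nonunits hr
  let _ : Field (R ⧸ M) := Ideal.Quotient.field M
  have hchar : CharP (R ⧸ M) r :=
    (CharP.charP_iff_prime_eq_zero Fact.out).mpr
      (by simpa using Ideal.Quotient.eq_zero_iff_mem.mpr hrM)
  let _ : Algebra (ZMod r) (R ⧸ M) := ZMod.algebra _ r
  have : Algebra.FiniteType (ZMod r) (R ⧸ M) := .of_restrictScalars_finiteType ℤ _ _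
  have : Module.Finite (ZMod r) (R ⧸ M) := finite_of_finite_type_of_isJacobsonRing _ _
  exact ⟨M, hM, Module.finite_of_finite (ZMod r), hchar⟩

theorem exists_ringHom_galoisField_hasEnoughRootsOfUnity (K : Type*) [Field K] [Finite K] (r : ℕ)
    [Fact r.Prime] [CharP K r] {N : ℕ} (hN : ¬ r ∣ N) :
    ∃ n, 1 ≤ n ∧ Nonempty (K →+* GaloisField r n) ∧
      HasEnoughRootsOfUnity (GaloisField r n) N := by
  have : NeZero (N : K) := ⟨by rwa [Ne, CharP.cast_eq_zero_iff K r]⟩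
  have : NeZero N := .of_map (Nat.castRingHom K)
  let L := CyclotomicField N K
  have : Module.Finite K L := IsCyclotomicExtension.finite {N} K L
  have : Finite L := Module.finite_of_finite K
  have : CharP L r := charP_of_injective_algebraMap (algebraMap K L).injective r
  let _ : Algebra (ZMod r) L := ZMod.algebra L r
  let e := GaloisField.algEquivGaloisField r _ (FiniteField.pow_finrank_eq_natCard r L).symm
  refine ⟨_, finrank_pos (R := ZMod r) (M := L), ⟨e.toRingHom.comp (algebraMap K L)⟩,
    ⟨_, (IsCyclotomicExtension.zeta_spec N K L).map_of_injective e.injective⟩, inferInstance⟩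

theorem exists_representation_galoisField_isFixedPointFree_iff {k A U : Type*} [Field k]
    [CharZero k] [Group A] [Finite A] [AddCommGroup U] [Module k U] [FiniteDimensional k U]
    (π : Representation k A U) {r N : ℕ} [Fact r.Prime] (hA : ¬ r ∣ Nat.card A) (hN : ¬ r ∣ N) :
    ∃ n, 1 ≤ n ∧ HasEnoughRootsOfUnity (GaloisField r n) N ∧
      ∃ (d : ℕ) (σ : Representation (GaloisField r n) A (Fin d → GaloisField r n)),
        ∀ a, IsFixedPointFree (σ a) ↔ IsFixedPointFree (π a) := by
  obtain ⟨O, hO⟩ := exists_valuationSubring_not_isUnit_natCast_s4 k (Fact.out : r.Prime).ne_one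
  obtain ⟨d, b, τ, hτ⟩ := exists_basis_toMatrix_eq_mapMatrix (O := O) π
  obtain ⟨R, τR, hR, hτR⟩ := exists_subalgebra_fg_mapMatrix_eq τ
  have : Algebra.FiniteType ℤ R := R.fg_iff_finiteType.mp hR
  have hrR : ¬ IsUnit (r : R) := fun h ↦ hO (by simpa using h.map (algebraMap R O))
  obtain ⟨M, hM, hfin, hchar⟩ := exists_isMaximal_finite_quotient_charP hrR
  let _ : Field (R ⧸ M) := Ideal.Quotient.field M
  obtain ⟨n, hn, ⟨φ⟩, hroots⟩ := exists_ringHom_galoisField_hasEnoughRootsOfUnity (R ⧸ M) r hN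
  let φR : R →+* GaloisField r n := φ.comp (Ideal.Quotient.mk M)
  let σ : Representation (GaloisField r n) A (Fin d → GaloisField r n) :=
    Matrix.toLinAlgEquiv'.toMonoidHom.comp (φR.mapMatrix.toMonoidHom.comp τR)
  refine ⟨n, hn, hroots, d, σ, fun a ↦ ?_⟩
  have hpow : τR a ^ Nat.card A = 1 := by rw [← map_pow, pow_card_eq_one', map_one]
  have hσ : LinearMap.toMatrix (Pi.basisFun _ _) (Pi.basisFun _ _) (σ a) =
      φR.mapMatrix (τR a) := LinearMap.toMatrix'_toLin' _
  have hπ : LinearMap.toMatrix b b (π a) =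
      ((algebraMap O k).comp (algebraMap R O)).mapMatrix (τR a) := by
    rw [hτ, ← hτR]
    rfl
  rw [isFixedPointFree_iff_det_toMatrix b, hπ, det_mapMatrix_sub_one_ne_zero_iff _ hpow
      (Nat.cast_ne_zero.mpr Nat.card_pos.ne'),
    isFixedPointFree_iff_det_toMatrix (Pi.basisFun _ _), hσ,
    det_mapMatrix_sub_one_ne_zero_iff _ hpow (by rwa [Ne, CharP.cast_eq_zero_iff _ r])]

end Reduction

theorem representation_extension_fixed_point_free_general {k A B U : Type*} [Field k] [CharZero k]
    [Group A] [Finite A] [Group B] [Finite B] (F : Subgroup B) [F.Normal] [IsCyclic F]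
    [AddCommGroup U] [Module k U] [FiniteDimensional k U] (π : Representation k A U) {r : ℕ}
    [Fact r.Prime] (hA : ¬ r ∣ Nat.card A) (hF : ¬ r ∣ Nat.card F) :
    ∃ n, 1 ≤ n ∧
      ∃ (m : ℕ) (ρ : Representation (GaloisField r n) (A × B) (Fin m → GaloisField r n)),
        (∀ a, IsFixedPointFree (π a) ↔ IsFixedPointFree (ρ (a, 1))) ∧
        ∀ f ∈ F, f ≠ 1 → IsFixedPointFree (ρ (1, f)) := by
  obtain ⟨n, hn, _, d, σ, hσ⟩ := exists_representation_galoisField_isFixedPointFree_iff π hA hF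
  obtain ⟨ψ, hψ⟩ := exists_representation_isFixedPointFree_of_ne_one F (GaloisField r n)
  let τ := coind F.subtype ψ
  have := nontrivial_coindV F.subtype_injective ψ
  obtain ⟨m, ρ, hρ⟩ := exists_representation_fin_isFixedPointFree_iff
    (V := coindV F.subtype ψ ⊗[GaloisField r n] (Fin d → GaloisField r n))
    (Representation.tprod (τ.comp (MonoidHom.snd A B)) (σ.comp (MonoidHom.fst A B)))
  refine ⟨n, hn, m, ρ, fun a ↦ ?_, fun f hf hf1 ↦ ?_⟩
  · rw [hρ, ← hσ, ← isFixedPointFree_lTensor_iff (W := coindV F.subtype ψ)]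
    simp [LinearMap.lTensor, End.one_eq_id]
  · have hτ : IsFixedPointFree (τ f) := isFixedPointFree_coind _ _ fun x ↦
      ⟨⟨_, ‹F.Normal›.conj_mem f hf x⟩, inv_mul_cancel_right _ _,
        hψ _ (by simpa [Subtype.ext_iff] using hf1)⟩
    rw [hρ]
    simpa [LinearMap.rTensor, End.one_eq_id] using hτ.rTensor (W := Fin d → GaloisField r n)

/-- Given finite groups `A` and `B` with `|B|` squarefree, a nilpotent normal subgroup
`F` of `B`, a finite-dimensional complex representation `π` of `A`, and a prime `r`
with `|A × B| ∣ r - 1`, there is a finite field `K` of characteristic `r` and a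
finite-dimensional `K`-representation `ρ` of `A × B` such that: (1) an element `a ∈ A`
acts fixed point freely under `π` iff `(a,1)` acts fixed point freely under `ρ`;
(2) every nontrivial element of `F` acts fixed point freely under `ρ`. -/
theorem representation_extension_fixed_point_free
    (A B : Type*) [Group A] [Group B] [Finite A] [Finite B]
    (hB : Squarefree (Nat.card B))
    (F : Subgroup B) (hFn : F.Normal) (hFnil : Group.IsNilpotent F)
    (U : Type*) [AddCommGroup U] [Module ℂ U] [FiniteDimensional ℂ U]
    (π : Representation ℂ A U)
    (r : ℕ) [hr : Fact r.Prime] (hdvd : Nat.card (A × B) ∣ r - 1) :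
    ∃ (n : ℕ), 1 ≤ n ∧
      ∃ (m : ℕ) (ρ : Representation (GaloisField r n) (A × B) (Fin m → GaloisField r n)),
        (∀ a : A,
          (¬ ∃ u : U, u ≠ 0 ∧ π a u = u) ↔
            (¬ ∃ v : Fin m → GaloisField r n, v ≠ 0 ∧ ρ (a, 1) v = v)) ∧
        (∀ f : B, f ∈ F → f ≠ 1 →
          ¬ ∃ v : Fin m → GaloisField r n, v ≠ 0 ∧ ρ (1, f) v = v) := by
  have : IsZGroup F := .of_squarefree (hB.squarefree_of_dvd F.card_subgroup_dvd_card)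
  have hr1 : ¬ r ∣ r - 1 := Nat.not_dvd_of_pos_of_lt (Nat.sub_pos_of_lt hr.out.one_lt)
    (Nat.sub_lt hr.out.pos one_pos)
  rw [Nat.card_prod] at hdvd
  simpa only [isFixedPointFree_iff_not_exists] using
    representation_extension_fixed_point_free_general F π (r := r)
      (fun h ↦ hr1 ((h.mul_right _).trans hdvd))
      (fun h ↦ hr1 (((h.trans F.card_subgroup_dvd_card).mul_left _).trans hdvd))
end
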